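/- Let ε > 0, let Υ be a finite collection of pairwise disjoint subintervals of ℝ⁺, and let {b_υ}_{υ∈Υ} ⊂ ℝ be a collection of coefficients. Then for 1 < q < ∞, ‖ Σ_{υ∈Υ} b_υ 1_υ ‖_{M^q} ≤ C_{q,ε} |Υ|^{|1/q − 1/2| + ε} · sup_{υ∈Υ} |b_υ|, where |Υ| is the number of intervals in Υ. -/

import Mathlib

open MeasureTheory Set Filter
open scoped ENNReal NNReal Classical BigOperators RealInnerProductSpace

noncomputable section

/-- The binary digit of `x` in position `n+1` to the left of the point
(terminating expansion for dyadic rationals). -/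
def digit (n : ℤ) (x : ℝ) : ℤ := ⌊x / 2 ^ n⌋ % 2

/-- Bitwise addition `⊕` on nonnegative reals. -/
def wXor (x y : ℝ) : ℝ := ∑' n : ℤ, (((digit n x + digit n y) % 2 : ℤ) : ℝ) * 2 ^ n

/-- The `n`-th digit of the bitwise product `x ⊗ y`. -/
def wMulDigit (n : ℤ) (x y : ℝ) : ℤ :=
  ⌊∑' m : ℤ, ((digit (n - m) x * digit m y : ℤ) : ℝ)⌋ % 2

/-- Bitwise multiplication `⊗` on nonnegative reals. -/
def wMul (x y : ℝ) : ℝ := ∑' n : ℤ, ((wMulDigit n x y : ℤ) : ℝ) * 2 ^ n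

/-- The Walsh character `e(x) = exp (i π d₋₁(x))`. -/
def walshe (x : ℝ) : ℝ := (-1 : ℝ) ^ (digit (-1) x)

/-- The Walsh–Fourier transform on `ℝ⁺`; it is involutive, so it also serves
as the inverse Walsh–Fourier transform `ˇ`. -/
def walshFT (f : ℝ → ℝ) (ξ : ℝ) : ℝ := ∫ x in Set.Ici (0 : ℝ), walshe (wMul ξ x) * f x

/-- Lebesgue measure on `ℝ⁺`. -/
def μplus : Measure ℝ := volume.restrict (Set.Ici 0)

/-- `L^p` norm (real exponent `p`) of an `ℝ≥0∞`-valued function. -/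
def lpNormE (p : ℝ) (μ : Measure ℝ) (F : ℝ → ℝ≥0∞) : ℝ≥0∞ := (∫⁻ x, F x ^ p ∂μ) ^ (1 / p)

/-- The `r`-variation norm of `m` on the domain `D`. -/
def vnorm {ι E : Type*} [LinearOrder ι] [NormedAddCommGroup E] (r : ℝ) (D : Set ι)
    (m : ι → E) : ℝ≥0∞ :=
  (⨆ ξ ∈ D, (‖m ξ‖₊ : ℝ≥0∞)) +
    ⨆ (N : ℕ) (u : Fin (N + 1) → ι) (_ : StrictMono u) (_ : ∀ i, u i ∈ D),
      (∑ i : Fin N, (‖m (u i.succ) - m (u i.castSucc)‖₊ : ℝ≥0∞) ^ r) ^ (1 / r)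

/-- The Walsh `L^q`-multiplier norm. -/
def Mq (q : ℝ) (m : ℝ → ℝ) : ℝ≥0∞ :=
  ⨆ (g : ℝ → ℝ) (_ : eLpNorm g (ENNReal.ofReal q) μplus = 1),
    eLpNorm (walshFT fun ξ => m ξ * walshFT g ξ) (ENNReal.ofReal q) μplus

/-- The Walsh `L^q`-maximal-multiplier norm of a sequence of multipliers. -/
def Mqstar (q : ℝ) (m : ℤ → ℝ → ℝ) : ℝ≥0∞ :=
  ⨆ (g : ℝ → ℝ) (_ : eLpNorm g (ENNReal.ofReal q) μplus = 1),
    lpNormE q μplus fun x => ⨆ k : ℤ, (‖walshFT (fun ξ => m k ξ * walshFT g ξ) x‖₊ : ℝ≥0∞)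

/-- The `s`-variation `L^q`-multiplier norm of a sequence of multipliers. -/
def Mqs (q s : ℝ) (m : ℤ → ℝ → ℝ) : ℝ≥0∞ :=
  ⨆ (g : ℝ → ℝ) (_ : eLpNorm g (ENNReal.ofReal q) μplus = 1),
    lpNormE q μplus fun x =>
      vnorm s (Set.univ : Set ℤ) fun k => walshFT (fun ξ => m k ξ * walshFT g ξ) x

/-- Dyadic intervals `[n 2^k, (n+1) 2^k)`. -/
def IsDyadic (I : Set ℝ) : Prop :=
  ∃ n k : ℤ, I = Set.Ico ((n : ℝ) * 2 ^ k) (((n : ℝ) + 1) * 2 ^ k)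

/-- Dyadic intervals of length `2^k`. -/
def IsDyadicLen (k : ℤ) (ω : Set ℝ) : Prop :=
  ∃ n : ℤ, ω = Set.Ico ((n : ℝ) * 2 ^ k) (((n : ℝ) + 1) * 2 ^ k)

/-- The lower half of an interval. -/
def lowerHalf (ω : Set ℝ) : Set ℝ := ω ∩ Set.Iio ((sInf ω + sSup ω) / 2)

/-- The upper half of an interval. -/
def upperHalf (ω : Set ℝ) : Set ℝ := ω ∩ Set.Ici ((sInf ω + sSup ω) / 2)

/-- A bitile `I × ω ⊆ ℝ⁺ × ℝ⁺` : a rectangle of dyadic intervals of area `2`. -/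
structure Bitile where
  I : Set ℝ
  ω : Set ℝ
  hI : IsDyadic I
  hω : IsDyadic ω
  hIsub : I ⊆ Set.Ici 0
  hωsub : ω ⊆ Set.Ici 0
  harea : volume I * volume ω = 2

/-- The `L²`-normalized Walsh wave packet of the tile `I × ω`. -/
def wavePacket (I ω : Set ℝ) (x : ℝ) : ℝ :=
  Real.sqrt (volume I).toReal * walshFT (Set.indicator ω fun _ => (1 : ℝ)) (wXor x (sInf I))

/-- `⟨f, φ_{P_l}⟩`, the pairing of `f` with the wave packet of the lower tile of `P`. -/
def walshCoef (P : Bitile) (f : ℝ → ℝ) : ℝ :=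
  ∫ y in Set.Ici (0 : ℝ), f y * wavePacket P.I (lowerHalf P.ω) y

/-- The partial order on bitiles. -/
def Bitile.le (P Q : Bitile) : Prop := P.I ⊆ Q.I ∧ Q.ω ⊆ P.ω

/-- Convexity of a set of bitiles. -/
def ConvexBitiles (S : Set Bitile) : Prop :=
  ∀ P₁ P₂ P₃ : Bitile, P₁ ∈ S → P₃ ∈ S → Bitile.le P₁ P₂ → Bitile.le P₂ P₃ → P₂ ∈ S

/-- The truncated partial Walsh-sum operator attached to a collection `Ps` of bitiles. -/
def Sk (Ps : Set Bitile) (f : ℝ → ℝ) (k : ℤ) (ξ x : ℝ) : ℝ :=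
  ∑ᶠ (P : Bitile) (_ : P ∈ Ps ∧ volume P.I < 2 ^ k),
    walshCoef P f * wavePacket P.I (lowerHalf P.ω) x *
      Set.indicator (upperHalf P.ω) (fun _ => (1 : ℝ)) ξ

/-- The partial Walsh-sum operator `S[f](ξ,x) = (f̂ 1_{[0,ξ)})ˇ(x)`. -/
def Spartial (f : ℝ → ℝ) (ξ x : ℝ) : ℝ :=
  walshFT (fun η => Set.indicator (Set.Ico 0 ξ) (fun _ => (1 : ℝ)) η * walshFT f η) x

/-- A tree of bitiles with top data `(ξtop, Itop)`. -/
structure WTree where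
  carrier : Set Bitile
  ξtop : ℝ
  Itop : Set ℝ

/-- The defining conditions of a tree. -/
def IsTree (T : WTree) : Prop :=
  IsDyadic T.Itop ∧ 0 ≤ T.ξtop ∧ ∀ P ∈ T.carrier, P.I ⊆ T.Itop ∧ T.ξtop ∈ P.ω

/-- `u`-overlapping trees. -/
def UOverlapping (T : WTree) : Prop := ∀ P ∈ T.carrier, T.ξtop ∈ upperHalf P.ω

/-- `l`-overlapping trees. -/
def LOverlapping (T : WTree) : Prop := ∀ P ∈ T.carrier, T.ξtop ∈ lowerHalf P.ω

/-- `T` is td-maximal among the trees in `Cc` : maximal with respect to inclusion among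
trees in `Cc` with the same top data. -/
def TdMaximalAmong (T : WTree) (Cc : Set WTree) : Prop :=
  T ∈ Cc ∧ ∀ T' ∈ Cc, T'.ξtop = T.ξtop → T'.Itop = T.Itop →
    T.carrier ⊆ T'.carrier → T'.carrier ⊆ T.carrier

/-- Order on the lower tiles of two bitiles. -/
def lowerLE (P Q : Bitile) : Prop := P.I ⊆ Q.I ∧ lowerHalf Q.ω ⊆ lowerHalf P.ω

/-- Strict order on the lower tiles of two bitiles. -/
def lowerLT (P Q : Bitile) : Prop := lowerLE P Q ∧ ¬ lowerLE Q P

/-- `l`-convexity of a set of bitiles. -/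
def LConvex (S : Set Bitile) : Prop :=
  ∀ P P' P'' : Bitile, P ∈ S → P'' ∈ S → lowerLT P P' → lowerLT P' P'' → P' ∈ S

/-- A properly-sorted collection of `l`-overlapping trees. -/
def ProperlySorted (Ts : Set WTree) : Prop :=
  (∀ T ∈ Ts, IsTree T ∧ LOverlapping T ∧ LConvex T.carrier) ∧
  (∀ T ∈ Ts, ∀ T' ∈ Ts, T ≠ T' → T.carrier ∩ T'.carrier = ∅) ∧
  (∀ T ∈ Ts, ∀ P ∈ T.carrier, ∀ T' ∈ Ts, (T'.Itop ∩ P.I).Nonempty → T'.ξtop ∉ upperHalf P.ω)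

/-- The multiplier `𝒟_k = Σ_{|ω| = 2^k, ω ∩ Ξ ≠ ∅} a_ω 1_ω`. -/
def Dk (a : Set ℝ → ℝ) (Ξ : Set ℝ) (k : ℤ) (ξ : ℝ) : ℝ :=
  ∑ᶠ (ω : Set ℝ) (_ : IsDyadicLen k ω ∧ (ω ∩ Ξ).Nonempty),
    a ω * Set.indicator ω (fun _ => (1 : ℝ)) ξ

/-- The sequence `k ↦ Σ_{|ω| = 2^k} a_ω 1_ω(ξ)`. -/
def dyadicSum (a : Set ℝ → ℝ) (ξ : ℝ) (k : ℤ) : ℝ :=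
  ∑ᶠ (ω : Set ℝ) (_ : IsDyadicLen k ω), a ω * Set.indicator ω (fun _ => (1 : ℝ)) ξ

/-- A tile `I × ω ⊆ ℝ⁺ × ℝ⁺` : a rectangle of dyadic intervals of area `1`. -/
structure WTile where
  I : Set ℝ
  ω : Set ℝ
  hI : IsDyadic I
  hω : IsDyadic ω
  hIsub : I ⊆ Set.Ici 0
  hωsub : ω ⊆ Set.Ici 0
  harea : volume I * volume ω = 1

/-- The subset of the phase plane occupied by a tile. -/
def WTile.carrier (p : WTile) : Set (ℝ × ℝ) := p.I ×ˢ p.ω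

/-- The phase-plane projection `Π_S` associated to a region `S` which can be written as a
finite disjoint union of tiles (it is independent of the chosen tiling). -/
def phaseProj (S : Set (ℝ × ℝ)) (f : ℝ → ℝ) : ℝ → ℝ :=
  if h : ∃ ps : Set WTile, ps.Finite ∧ ps.PairwiseDisjoint WTile.carrier ∧
      (⋃ p ∈ ps, p.carrier) = S then
    fun x => ∑ᶠ p ∈ h.choose,
      (∫ y in Set.Ici (0 : ℝ), f y * wavePacket p.I p.ω y) * wavePacket p.I p.ω x
  else 0

/-- The region of the phase plane occupied by a tree. -/
def treeRegion (T : WTree) : Set (ℝ × ℝ) := ⋃ P ∈ T.carrier, P.I ×ˢ P.ω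

/-- `size(Ps, f) = sup_{T ⊆ Ps convex tree} |I_T|^{-1/2} ‖Π_T f‖_{L²}`. -/
def size (Ps : Set Bitile) (f : ℝ → ℝ) : ℝ≥0∞ :=
  ⨆ (T : WTree) (_ : IsTree T ∧ ConvexBitiles T.carrier ∧ T.carrier ⊆ Ps),
    (volume T.Itop ^ (1 / 2 : ℝ))⁻¹ * eLpNorm (phaseProj (treeRegion T) f) 2 μplus


/-! ### Finite Walsh model -/

namespace FW

/-- sign factor -/
def sg (a b : Fin 2) : ℝ := if a = 1 ∧ b = 1 then -1 else 1

lemma sg_comm (a b : Fin 2) : sg a b = sg b a := by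
  unfold sg; simp only [and_comm]

lemma sg_add (a b c : Fin 2) : sg a (b + c) = sg a b * sg a c := by
  unfold sg; fin_cases a <;> fin_cases b <;> fin_cases c <;> simp

lemma sg_abs (a b : Fin 2) : |sg a b| = 1 := by
  unfold sg; split_ifs <;> simp

lemma fin2_add_self (a : Fin 2) : a + a = 0 := by
  fin_cases a <;> rfl

lemma fin2_add_eq_zero (a b : Fin 2) : a + b = 0 ↔ a = b := by
  fin_cases a <;> fin_cases b <;> simp

lemma fin2_ne_zero (a : Fin 2) (h : a ≠ 0) : a = 1 := by
  fin_cases a <;> simp_all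

/-- the finite Walsh group -/
abbrev G (n : ℕ) := Fin n → Fin 2

variable {n : ℕ}

def chi (ξ x : G n) : ℝ := ∏ i, sg (ξ i) (x i)

lemma chi_comm (ξ x : G n) : chi ξ x = chi x ξ := by
  unfold chi; simp only [sg_comm]

lemma chi_add (ξ x y : G n) : chi ξ (x + y) = chi ξ x * chi ξ y := by
  unfold chi; simp only [Pi.add_apply, sg_add, Finset.prod_mul_distrib]

lemma chi_add' (ξ x y : G n) : chi (x + y) ξ = chi x ξ * chi y ξ := by
  rw [chi_comm, chi_add, chi_comm, chi_comm ξ y]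

lemma chi_abs (ξ x : G n) : |chi ξ x| = 1 := by
  unfold chi; rw [Finset.abs_prod]; simp [sg_abs]

lemma chi_zero (ξ : G n) : chi ξ 0 = 1 := by
  unfold chi; simp [sg]

lemma G_add_self (x : G n) : x + x = 0 := by
  funext i; exact fin2_add_self _

lemma G_add_eq_zero (x y : G n) : x + y = 0 ↔ x = y := by
  constructor
  · intro h; funext i; exact (fin2_add_eq_zero _ _).1 (congrFun h i)
  · rintro rfl; exact G_add_self x

lemma chi_single (i : Fin n) (z : G n) (h : z i ≠ 0) : chi (Pi.single i 1) z = -1 := by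
  unfold chi
  rw [Finset.prod_eq_single i]
  · simp [sg, fin2_ne_zero _ h]
  · intro j _ hj; simp [sg, Pi.single_eq_of_ne hj]
  · simp

def kern (μ : G n → ℝ) (z : G n) : ℝ := (2 ^ n)⁻¹ * ∑ ξ, μ ξ * chi ξ z

def Inv (s : ℕ) (μ : G n → ℝ) : Prop :=
  ∀ i : Fin n, s ≤ i.val → ∀ ξ, μ (ξ + Pi.single i 1) = μ ξ

lemma kern_local {s : ℕ} {μ : G n → ℝ} (h : Inv s μ) {z : G n} {i : Fin n} (hi : s ≤ i.val)
    (hz : z i ≠ 0) : kern μ z = 0 := by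
  have : ∑ ξ, μ ξ * chi ξ z = - ∑ ξ, μ ξ * chi ξ z := by
    have e := Equiv.sum_comp (Equiv.addRight (Pi.single i 1 : G n)) (fun ξ => μ ξ * chi ξ z)
    rw [← Finset.sum_neg_distrib, ← e]
    refine Finset.sum_congr rfl fun ξ _ => ?_
    simp only [Equiv.coe_addRight]
    rw [h i hi, chi_add', chi_single i z hz]; ring
  have h0 : ∑ ξ, μ ξ * chi ξ z = 0 := by linarith
  rw [kern, h0, mul_zero]

lemma card_G : (Fintype.card (G n) : ℝ) = 2 ^ n := by simp

lemma kern_one (z : G n) : kern (fun _ => 1) z = if z = 0 then 1 else 0 := by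
  split_ifs with h
  · subst h; simp [kern, chi_zero]
  · have : ∃ i, z i ≠ 0 := by
      by_contra hh; push Not at hh; exact h (funext hh)
    obtain ⟨i, hi⟩ := this
    exact kern_local (s := 0) (fun _ _ _ => rfl) (Nat.zero_le _) hi

lemma orth (ξ η : G n) : ∑ x, chi ξ x * chi η x = if ξ = η then 2 ^ n else 0 := by
  have h := kern_one (ξ + η)
  unfold kern at h
  have h2 : ∑ x, chi ξ x * chi η x = ∑ x, 1 * chi x (ξ + η) := by
    refine Finset.sum_congr rfl fun x _ => ?_
    rw [chi_add, chi_comm ξ, chi_comm η, one_mul]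
  rw [h2]
  simp only [G_add_eq_zero] at h
  have hp : (2 : ℝ) ^ n ≠ 0 := by positivity
  rw [inv_mul_eq_iff_eq_mul₀ hp] at h
  rw [h]; split_ifs <;> simp

def ft (f : G n → ℝ) (ξ : G n) : ℝ := ∑ x, chi ξ x * f x

def T (m f : G n → ℝ) (x : G n) : ℝ := (2 ^ n)⁻¹ * ∑ ξ, chi ξ x * (m ξ * ft f ξ)

lemma T_eq_kern (m f : G n → ℝ) (x : G n) : T m f x = ∑ y, kern m (x + y) * f y := by
  unfold T kern ft
  simp only [Finset.mul_sum, Finset.sum_mul]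
  rw [Finset.sum_comm]
  refine Finset.sum_congr rfl fun y _ => Finset.sum_congr rfl fun ξ _ => ?_
  rw [chi_add]; ring

lemma T_add (m f g : G n → ℝ) : T m (f + g) = T m f + T m g := by
  funext x; simp only [T_eq_kern, Pi.add_apply, mul_add, Finset.sum_add_distrib]

lemma T_sub (m f g : G n → ℝ) : T m (f - g) = T m f - T m g := by
  funext x; simp only [T_eq_kern, Pi.sub_apply, mul_sub, Finset.sum_sub_distrib]

lemma T_sum {ι : Type*} (S : Finset ι) (m : G n → ℝ) (f : ι → G n → ℝ) :
    T m (fun x => ∑ i ∈ S, f i x) = fun x => ∑ i ∈ S, T m (f i) x := by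
  funext x; simp only [T_eq_kern, Finset.mul_sum]; rw [Finset.sum_comm]

lemma ft_T (m f : G n → ℝ) (ξ : G n) : ft (T m f) ξ = m ξ * ft f ξ := by
  have : ft (T m f) ξ = (2 ^ n)⁻¹ * ∑ η, (∑ x, chi ξ x * chi η x) * (m η * ft f η) := by
    unfold ft T
    set F := (fun η => ∑ x, chi η x * f x) with hF
    change ∑ x, chi ξ x * ((2 ^ n)⁻¹ * ∑ η, chi η x * (m η * F η)) = (2 ^ n)⁻¹ * ∑ η, (∑ x, chi ξ x * chi η x) * (m η * F η)
    have : ∀ x, chi ξ x * ((2 ^ n)⁻¹ * ∑ η, chi η x * (m η * F η))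
        = ∑ η, (2 ^ n)⁻¹ * (chi ξ x * chi η x * (m η * F η)) := by
      intro x; rw [Finset.mul_sum, Finset.mul_sum]
      exact Finset.sum_congr rfl fun η _ => by ring
    have e2 : ∑ x, chi ξ x * ((2 ^ n)⁻¹ * ∑ η, chi η x * (m η * F η))
      = (2 ^ n)⁻¹ * ∑ η, (∑ x, chi ξ x * chi η x) * (m η * F η) := by
      simp only [this]
      rw [Finset.sum_comm]
      simp only [Finset.mul_sum, Finset.sum_mul]
    exact e2
  rw [this]
  simp only [orth, ite_mul, zero_mul, Finset.sum_ite_eq, Finset.mem_univ, if_true]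
  have hp : (2 : ℝ) ^ n ≠ 0 := by positivity
  field_simp

lemma T_T (m m' f : G n → ℝ) : T m (T m' f) = T (fun ξ => m ξ * m' ξ) f := by
  funext x; unfold T
  congr 1
  refine Finset.sum_congr rfl fun ξ _ => ?_
  have := ft_T m' f ξ
  unfold T at this
  rw [this]; ring

lemma T_selfadj (m f g : G n → ℝ) : ∑ x, T m f x * g x = ∑ x, f x * T m g x := by
  simp only [T_eq_kern, Finset.sum_mul, Finset.mul_sum]
  rw [Finset.sum_comm]
  refine Finset.sum_congr rfl fun y _ => Finset.sum_congr rfl fun z _ => ?_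
  rw [add_comm]; ring

lemma plancherel (f : G n → ℝ) : ∑ ξ, ft f ξ ^ 2 = 2 ^ n * ∑ x, f x ^ 2 := by
  have h1 : ∀ x, T (fun _ => 1) f x = f x := by
    intro x
    rw [T_eq_kern]
    simp [kern_one, G_add_eq_zero]
  have : ∑ x, f x ^ 2 = ∑ x, f x * T (fun _ => 1) f x :=
    Finset.sum_congr rfl fun x _ => by rw [h1, sq]
  rw [this]; unfold T
  simp only [Finset.mul_sum]
  rw [Finset.sum_comm]
  refine Finset.sum_congr rfl fun ξ _ => ?_
  have hp : (2 : ℝ) ^ n ≠ 0 := by positivity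
  have : ft f ξ ^ 2 = ft f ξ * ∑ x, chi ξ x * f x := by rw [sq]; rfl
  rw [this, Finset.mul_sum]
  refine Finset.sum_congr rfl fun x _ => ?_
  field_simp

lemma T_L2 (m f : G n → ℝ) (hm : ∀ ξ, |m ξ| ≤ 1) : ∑ x, T m f x ^ 2 ≤ ∑ x, f x ^ 2 := by
  have hp : (0 : ℝ) < 2 ^ n := by positivity
  refine le_of_mul_le_mul_left ?_ hp
  rw [← plancherel, ← plancherel]
  refine Finset.sum_le_sum fun ξ _ => ?_
  rw [ft_T, mul_pow]
  have : m ξ ^ 2 ≤ 1 := by rw [← sq_abs]; exact pow_le_one₀ (abs_nonneg _) (hm ξ)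
  nlinarith [sq_nonneg (ft f ξ)]

/-- space dyadic interval of scale `s` around `x` -/
def I (s : ℕ) (x : G n) : Finset (G n) := Finset.univ.filter fun y => ∀ i : Fin n, s ≤ i.val → y i = x i

lemma card_I (s : ℕ) (x : G n) : (I s x).card ≤ 2 ^ s := by
  have : I s x = Fintype.piFinset (fun i : Fin n => if s ≤ i.val then {x i} else Finset.univ) := by
    ext y; simp only [I, Finset.mem_filter, Finset.mem_univ, true_and, Fintype.mem_piFinset]
    refine forall_congr' fun i => ?_
    split_ifs with h <;> simp [h]
  rw [this, Fintype.card_piFinset]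
  have : ∀ i : Fin n, (if s ≤ i.val then {x i} else (Finset.univ : Finset (Fin 2))).card
      = if s ≤ i.val then 1 else 2 := by
    intro i; split_ifs <;> simp
  simp only [this]
  rw [Finset.prod_ite]
  simp only [Finset.prod_const_one, one_mul, Finset.prod_const]
  refine Nat.pow_le_pow_right (by norm_num) ?_
  calc _ = ((Finset.univ.filter fun i : Fin n => ¬ s ≤ i.val).map Fin.valEmbedding).card := by
        rw [Finset.card_map]
    _ ≤ (Finset.range s).card := by
        refine Finset.card_le_card fun i => ?_
        simp only [Finset.mem_map, Finset.mem_filter, Finset.mem_univ, true_and, Finset.mem_range]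
        rintro ⟨j, hj, rfl⟩; simpa using hj
    _ = s := by simp

/-- frequency dyadic interval -/
def J (s : ℕ) (x : G n) : Finset (G n) := Finset.univ.filter fun y => ∀ i : Fin n, i.val < s → x i = y i

lemma card_J (s : ℕ) (x : G n) : (J s x).card ≤ 2 ^ (n - s) := by
  have : J s x = Fintype.piFinset (fun i : Fin n => if i.val < s then {x i} else Finset.univ) := by
    ext y; simp only [J, Finset.mem_filter, Finset.mem_univ, true_and, Fintype.mem_piFinset]
    refine forall_congr' fun i => ?_
    split_ifs with h <;> simp [h, eq_comm]
  rw [this, Fintype.card_piFinset]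
  have : ∀ i : Fin n, (if i.val < s then {x i} else (Finset.univ : Finset (Fin 2))).card
      = if i.val < s then 1 else 2 := by
    intro i; split_ifs <;> simp
  simp only [this]
  rw [Finset.prod_ite]
  simp only [Finset.prod_const_one, one_mul, Finset.prod_const]
  refine Nat.pow_le_pow_right (by norm_num) ?_
  calc _ = ((Finset.univ.filter fun i : Fin n => ¬ i.val < s).map Fin.valEmbedding).card := by
        rw [Finset.card_map]
    _ ≤ (Finset.Ico s n).card := by
        refine Finset.card_le_card fun i => ?_
        simp only [Finset.mem_map, Finset.mem_filter, Finset.mem_univ, true_and, Finset.mem_Ico]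
        rintro ⟨j, hj, rfl⟩; exact ⟨by simpa using hj, j.2⟩
    _ = n - s := by simp

/-- the multiplier hypothesis -/
def Good (m : G n → ℝ) (Ξ : Finset (G n)) : Prop :=
  ∀ (s : ℕ) (ξ : G n), (∀ ζ ∈ Ξ, ξ ∉ J s ζ) → ∀ i : Fin n, s ≤ i.val →
    m (ξ + Pi.single i 1) = m ξ

def bad (Ξ : Finset (G n)) (s : ℕ) (ξ : G n) : ℝ := if ∃ ζ ∈ Ξ, ξ ∈ J s ζ then 1 else 0

lemma mem_J_flip (s : ℕ) (i : Fin n) (hi : s ≤ i.val) (ζ ξ : G n) :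
    ξ + Pi.single i 1 ∈ J s ζ ↔ ξ ∈ J s ζ := by
  simp only [J, Finset.mem_filter, Finset.mem_univ, true_and, Pi.add_apply]
  refine forall_congr' fun j => forall_congr' fun hj => ?_
  have : j ≠ i := by rintro rfl; omega
  simp [Pi.single_eq_of_ne this]

lemma bad_inv (Ξ : Finset (G n)) (s : ℕ) : Inv s (bad Ξ s) := by
  intro i hi ξ
  unfold bad; simp only [mem_J_flip s i hi]

lemma good_inv {m : G n → ℝ} {Ξ : Finset (G n)} (h : Good m Ξ) (s : ℕ) :
    Inv s (fun ξ => m ξ * (1 - bad Ξ s ξ)) := by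
  intro i hi ξ
  simp only [bad_inv Ξ s i hi ξ]
  by_cases hb : ∃ ζ ∈ Ξ, ξ ∈ J s ζ
  · simp [bad, hb]
  · push Not at hb
    rw [h s ξ hb i hi]

lemma bad_kern (Ξ : Finset (G n)) (s : ℕ) (hs : s ≤ n) (z : G n) :
    |kern (bad Ξ s) z| ≤ Ξ.card * (2 ^ s : ℝ)⁻¹ := by
  unfold kern
  rw [abs_mul, abs_of_pos (by positivity : (0 : ℝ) < (2 ^ n)⁻¹)]
  have h1 : |∑ ξ, bad Ξ s ξ * chi ξ z| ≤ Ξ.card * 2 ^ (n - s) := by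
    calc _ ≤ ∑ ξ, |bad Ξ s ξ * chi ξ z| := Finset.abs_sum_le_sum_abs _ _
      _ = ∑ ξ, if ξ ∈ Ξ.biUnion (J s) then (1 : ℝ) else 0 := by
          refine Finset.sum_congr rfl fun ξ _ => ?_
          rw [abs_mul, chi_abs, mul_one]; unfold bad
          simp only [Finset.mem_biUnion]; split_ifs <;> simp
      _ = ((Ξ.biUnion (J s)).card : ℝ) := by
          rw [Finset.sum_ite_mem]; simp
      _ ≤ ((Ξ.card * 2 ^ (n - s) : ℕ) : ℝ) := by
          exact_mod_cast Finset.card_biUnion_le_card_mul _ _ _ fun ζ _ => card_J s ζ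
      _ = _ := by push_cast; rfl
  calc (2 ^ n : ℝ)⁻¹ * |∑ ξ, bad Ξ s ξ * chi ξ z| ≤ (2 ^ n : ℝ)⁻¹ * (Ξ.card * 2 ^ (n - s)) := by
        gcongr
    _ = _ := by
        have : (2 : ℝ) ^ n = 2 ^ (n - s) * 2 ^ s := by rw [← pow_add]; congr 1; omega
        rw [this]; field_simp

def Av (f : G n → ℝ) (s : ℕ) (x : G n) : ℝ := (2 ^ s)⁻¹ * ∑ y ∈ I s x, |f y|

def E (f : G n → ℝ) (κ : ℝ) (s : ℕ) : Finset (G n) :=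
  Finset.univ.filter fun x => κ < Av f s x ∧ ∀ t, s < t → t ≤ n → Av f t x ≤ κ

lemma I_congr {s t : ℕ} (hst : s ≤ t) {x y : G n} (h : y ∈ I s x) : I t y = I t x := by
  simp only [I, Finset.mem_filter, Finset.mem_univ, true_and] at h
  ext z; simp only [I, Finset.mem_filter, Finset.mem_univ, true_and]
  refine forall_congr' fun i => forall_congr' fun hi => ?_
  rw [h i (hst.trans hi)]

lemma E_congr {f : G n → ℝ} {κ : ℝ} {s : ℕ} {x y : G n} (h : y ∈ I s x) (hy : y ∈ E f κ s) :
    x ∈ E f κ s := by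
  simp only [E, Finset.mem_filter, Finset.mem_univ, true_and] at hy ⊢
  simp only [Av] at hy ⊢
  rw [I_congr le_rfl h] at hy
  refine ⟨hy.1, fun t ht htn => ?_⟩
  rw [← I_congr ht.le h]; exact hy.2 t ht htn

lemma I_symm {s : ℕ} {x y : G n} : y ∈ I s x ↔ x ∈ I s y := by
  simp only [I, Finset.mem_filter, Finset.mem_univ, true_and, eq_comm]

lemma E_disj {f : G n → ℝ} {κ : ℝ} {s t : ℕ} (ht : t ≤ n) (hst : s < t) {x : G n}
    (h1 : x ∈ E f κ s) (h2 : x ∈ E f κ t) : False := by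
  simp only [E, Finset.mem_filter, Finset.mem_univ, true_and] at h1 h2
  exact absurd (h1.2 t hst ht) (not_le.2 h2.1)

lemma E_disj' {f : G n → ℝ} {κ : ℝ} {s t : ℕ} (hs : s ≤ n) (ht : t ≤ n) (hst : s ≠ t) {x : G n}
    (h1 : x ∈ E f κ s) (h2 : x ∈ E f κ t) : False := by
  rcases lt_or_gt_of_ne hst with h | h
  · exact E_disj ht h h1 h2
  · exact E_disj hs h h2 h1

lemma sum_E_le (f : G n → ℝ) (κ : ℝ) :
    ∑ s ∈ Finset.range n, ∑ x ∈ E f κ s, |f x| ≤ ∑ x, |f x| := by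
  rw [← Finset.sum_biUnion]
  · exact Finset.sum_le_sum_of_subset_of_nonneg (Finset.subset_univ _) fun _ _ _ => abs_nonneg _
  · intro s hs t ht hst
    rw [Function.onFun, Finset.disjoint_left]
    intro x h1 h2
    simp only [Finset.coe_range, Set.mem_Iio] at hs ht
    exact E_disj' hs.le ht.le hst h1 h2

lemma card_E (f : G n → ℝ) (κ : ℝ) (s : ℕ) :
    ((E f κ s).card : ℝ) * κ ≤ ∑ x ∈ E f κ s, |f x| := by
  calc ((E f κ s).card : ℝ) * κ = ∑ x ∈ E f κ s, κ := by simp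
    _ ≤ ∑ x ∈ E f κ s, Av f s x := by
        refine Finset.sum_le_sum fun x hx => ?_
        simp only [E, Finset.mem_filter] at hx
        exact hx.2.1.le
    _ = ∑ x ∈ E f κ s, ∑ y ∈ E f κ s, if x ∈ I s y then (2 ^ s)⁻¹ * |f y| else 0 := by
        refine Finset.sum_congr rfl fun x hx => ?_
        rw [Av, Finset.mul_sum, ← Finset.sum_filter]
        refine Finset.sum_congr ?_ fun _ _ => rfl
        ext y; simp only [Finset.mem_filter]
        constructor
        · intro hy; exact ⟨E_congr (I_symm.1 hy) hx, I_symm.1 hy⟩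
        · intro hy; exact I_symm.1 hy.2
    _ = ∑ y ∈ E f κ s, ∑ x ∈ E f κ s, if x ∈ I s y then (2 ^ s)⁻¹ * |f y| else 0 :=
        Finset.sum_comm
    _ ≤ ∑ y ∈ E f κ s, |f y| := by
        refine Finset.sum_le_sum fun y _ => ?_
        calc _ ≤ ∑ x, if x ∈ I s y then (2 ^ s)⁻¹ * |f y| else 0 := by
              refine Finset.sum_le_sum_of_subset_of_nonneg (Finset.subset_univ _) fun _ _ _ => ?_
              split_ifs <;> positivity
          _ = (I s y).card * ((2 ^ s)⁻¹ * |f y|) := by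
              simp [Finset.sum_ite_mem]
          _ ≤ (2 ^ s : ℝ) * ((2 ^ s)⁻¹ * |f y|) := by
              gcongr; exact_mod_cast card_I s y
          _ = |f y| := by field_simp

end FW

namespace FW
variable {n : ℕ}

lemma T_local {s : ℕ} {μ : G n → ℝ} (h : Inv s μ) (f : G n → ℝ) (x : G n) :
    T μ f x = ∑ y ∈ I s x, kern μ (x + y) * f y := by
  rw [T_eq_kern]
  symm
  refine Finset.sum_subset (Finset.subset_univ _) fun y _ hy => ?_
  simp only [I, Finset.mem_filter, Finset.mem_univ, true_and] at hy
  push Not at hy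
  obtain ⟨i, hi, hne⟩ := hy
  rw [kern_local h hi, zero_mul]
  rw [Pi.add_apply, Ne, fin2_add_eq_zero]
  exact fun e => hne e.symm

/-- piece of `f` on `E s` -/
def hp (f : G n → ℝ) (κ : ℝ) (s : ℕ) (x : G n) : ℝ := if x ∈ E f κ s then f x else 0

lemma T_local_zero {s : ℕ} {μ : G n → ℝ} (h : Inv s μ) (f : G n → ℝ) (κ : ℝ) (x : G n)
    (hx : x ∉ E f κ s) : T μ (hp f κ s) x = 0 := by
  rw [T_local h]
  refine Finset.sum_eq_zero fun y hy => ?_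
  have : y ∉ E f κ s := fun hy' => hx (E_congr hy hy')
  simp [hp, this]

lemma Av_le_two (f : G n → ℝ) (κ : ℝ) (s : ℕ) (hs : s < n) (x : G n) (hx : x ∈ E f κ s) :
    ∑ y ∈ I s x, |f y| ≤ 2 ^ s * (2 * κ) := by
  simp only [E, Finset.mem_filter, Finset.mem_univ, true_and] at hx
  have h1 := hx.2 (s + 1) (by omega) (by omega)
  have h2 : ∑ y ∈ I s x, |f y| ≤ ∑ y ∈ I (s + 1) x, |f y| := by
    refine Finset.sum_le_sum_of_subset_of_nonneg ?_ fun _ _ _ => abs_nonneg _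
    intro y hy
    simp only [I, Finset.mem_filter, Finset.mem_univ, true_and] at hy ⊢
    exact fun i hi => hy i (by omega)
  rw [Av, inv_mul_le_iff₀ (by positivity)] at h1
  calc _ ≤ _ := h2
    _ ≤ _ := h1
    _ = _ := by rw [pow_succ]; ring

lemma gs_L2 (Ξ : Finset (G n)) (f : G n → ℝ) (κ : ℝ) (s : ℕ) (hs : s < n) :
    ∑ x, T (bad Ξ s) (hp f κ s) x ^ 2 ≤ 2 * κ * Ξ.card * ∑ x ∈ E f κ s, |f x| := by
  set h := hp f κ s with hh
  have e1 : ∑ x, T (bad Ξ s) h x ^ 2 = ∑ x, h x * T (bad Ξ s) h x := by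
    have : (fun ξ => bad Ξ s ξ * bad Ξ s ξ) = bad Ξ s := by
      funext ξ; unfold bad; split_ifs <;> simp
    conv_rhs => rw [← this, ← T_T, ← T_selfadj]
    exact Finset.sum_congr rfl fun x _ => sq _
  rw [e1, ← Finset.sum_filter_add_sum_filter_not Finset.univ (fun x => x ∈ E f κ s)]
  have e2 : ∑ x ∈ Finset.univ.filter (fun x => ¬ x ∈ E f κ s), h x * T (bad Ξ s) h x = 0 := by
    refine Finset.sum_eq_zero fun x hx => ?_
    simp only [Finset.mem_filter, Finset.mem_univ, true_and] at hx
    simp [hh, hp, hx]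
  rw [e2, add_zero, Finset.mul_sum]
  simp only [Finset.filter_mem_eq_inter, Finset.univ_inter]
  refine Finset.sum_le_sum fun x hx => ?_
  have hxf : |h x| = |f x| := by simp [hh, hp, hx]
  have hb : |T (bad Ξ s) h x| ≤ 2 * κ * Ξ.card := by
    rw [T_local (bad_inv Ξ s)]
    calc _ ≤ ∑ y ∈ I s x, |kern (bad Ξ s) (x + y) * h y| := Finset.abs_sum_le_sum_abs _ _
      _ ≤ ∑ y ∈ I s x, (Ξ.card * (2 ^ s : ℝ)⁻¹) * |f y| := by
          refine Finset.sum_le_sum fun y _ => ?_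
          rw [abs_mul]
          refine mul_le_mul (bad_kern Ξ s hs.le _) ?_ (abs_nonneg _) (by positivity)
          simp only [hh, hp]; split_ifs <;> simp
      _ = (Ξ.card * (2 ^ s : ℝ)⁻¹) * ∑ y ∈ I s x, |f y| := by rw [Finset.mul_sum]
      _ ≤ (Ξ.card * (2 ^ s : ℝ)⁻¹) * (2 ^ s * (2 * κ)) := by
          gcongr; exact Av_le_two f κ s hs x hx
      _ = _ := by field_simp
  calc _ ≤ |h x * T (bad Ξ s) h x| := le_abs_self _
    _ = |T (bad Ξ s) h x| * |f x| := by rw [abs_mul, hxf, mul_comm]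
    _ ≤ _ := by gcongr

lemma sq_sum_disj {ι : Type*} (S : Finset ι) (u : ι → ℝ)
    (h : ∀ i ∈ S, ∀ j ∈ S, i ≠ j → u i * u j = 0) : (∑ i ∈ S, u i) ^ 2 = ∑ i ∈ S, u i ^ 2 := by
  rw [sq, Finset.sum_mul_sum]
  refine Finset.sum_congr rfl fun i hi => ?_
  rw [Finset.sum_eq_single i]
  · rw [sq]
  · intro j hj hne; exact h i hi j hj hne.symm
  · intro h; exact absurd hi h

lemma cheb (F : G n → ℝ) (t : ℝ) (ht : 0 < t) :
    ((Finset.univ.filter fun x => t < |F x|).card : ℝ) * t ^ 2 ≤ ∑ x, F x ^ 2 := by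
  calc _ = ∑ x ∈ Finset.univ.filter (fun x => t < |F x|), t ^ 2 := by simp
    _ ≤ ∑ x ∈ Finset.univ.filter (fun x => t < |F x|), F x ^ 2 := by
        refine Finset.sum_le_sum fun x hx => ?_
        simp only [Finset.mem_filter, Finset.mem_univ, true_and] at hx
        rw [← sq_abs (F x)]; gcongr
    _ ≤ _ := Finset.sum_le_sum_of_subset_of_nonneg (Finset.subset_univ _) fun _ _ _ => sq_nonneg _

lemma weak {m : G n → ℝ} {Ξ : Finset (G n)} (hG : Good m Ξ) (hm : ∀ ξ, |m ξ| ≤ 1)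
    {r : ℝ} (hr : 1 ≤ r) (hΞ : (Ξ.card : ℝ) ≤ r ^ 2) (f : G n → ℝ) {t : ℝ} (ht : 0 < t) :
    ((Finset.univ.filter fun x => t < |T m f x|).card : ℝ) * t ≤ 7 * r * ∑ x, |f x| := by
  have hr0 : 0 < r := by linarith
  set κ := t / r with hκ
  have hκ0 : 0 < κ := by positivity
  have htκ : t = κ * r := by rw [hκ]; field_simp
  set S := ∑ x, |f x| with hS
  have hS0 : 0 ≤ S := Finset.sum_nonneg fun _ _ => abs_nonneg _
  by_cases htop : ∃ x, κ < Av f n x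
  · obtain ⟨x, hx⟩ := htop
    have hI : I n x = Finset.univ := by
      ext y; simp only [I, Finset.mem_filter, Finset.mem_univ, true_and, iff_true]
      intro i hi; exact absurd i.2 (by omega)
    rw [Av, hI, lt_inv_mul_iff₀ (by positivity)] at hx
    have hc : ((Finset.univ.filter fun x => t < |T m f x|).card : ℝ) ≤ 2 ^ n := by
      rw [← card_G]; exact_mod_cast Finset.card_le_univ _
    calc _ ≤ (2 ^ n : ℝ) * t := by gcongr
      _ = (2 ^ n * κ) * r := by rw [htκ]; ring
      _ ≤ S * r := by gcongr
      _ ≤ _ := by nlinarith [mul_nonneg hS0 hr0.le]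
  push Not at htop
  set U := (Finset.range n).biUnion (E f κ) with hU
  have hUcard : (U.card : ℝ) * κ ≤ S := by
    calc (U.card : ℝ) * κ ≤ (∑ s ∈ Finset.range n, ((E f κ s).card : ℝ)) * κ := by
          gcongr; exact_mod_cast Finset.card_biUnion_le
      _ = ∑ s ∈ Finset.range n, ((E f κ s).card : ℝ) * κ := by rw [Finset.sum_mul]
      _ ≤ ∑ s ∈ Finset.range n, ∑ x ∈ E f κ s, |f x| := Finset.sum_le_sum fun s _ => card_E f κ s
      _ ≤ S := sum_E_le f κ
  have hoff : ∀ x, x ∉ U → |f x| ≤ κ := by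
    intro x hx
    by_contra hlt
    push Not at hlt
    have h0 : κ < Av f 0 x := by
      have : I 0 x = {x} := by
        ext y; simp only [I, Finset.mem_filter, Finset.mem_univ, true_and, Finset.mem_singleton,
          Nat.zero_le, true_imp_iff]
        exact ⟨funext, fun h i => by rw [h]⟩
      simpa [Av, this] using hlt
    let P : ℕ → Prop := fun s => κ < Av f s x
    have hP : P (Nat.findGreatest P n) := Nat.findGreatest_spec (Nat.zero_le n) h0
    have hle : Nat.findGreatest P n ≤ n := Nat.findGreatest_le n
    have hne : Nat.findGreatest P n ≠ n := by
      intro e; rw [e] at hP; exact absurd (htop x) (not_le.2 hP)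
    apply hx
    rw [hU, Finset.mem_biUnion]
    refine ⟨Nat.findGreatest P n, Finset.mem_range.2 (lt_of_le_of_ne hle hne), ?_⟩
    simp only [E, Finset.mem_filter, Finset.mem_univ, true_and]
    exact ⟨hP, fun t ht htn => not_lt.1 (Nat.findGreatest_is_greatest ht htn)⟩
  set f0 : G n → ℝ := fun x => if x ∈ U then 0 else f x with hf0
  set gs : G n → ℝ := fun x => ∑ s ∈ Finset.range n, T (bad Ξ s) (hp f κ s) x with hgs
  set hsum : G n → ℝ := fun x => ∑ s ∈ Finset.range n, hp f κ s x with hhs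
  have hdec : f = f0 + hsum := by
    funext x
    simp only [Pi.add_apply, hf0, hhs]
    by_cases hx : x ∈ U
    · rw [if_pos hx, zero_add]
      rw [hU, Finset.mem_biUnion] at hx
      obtain ⟨s, hs, hxs⟩ := hx
      rw [Finset.sum_eq_single s]
      · simp [hp, hxs]
      · intro t ht hne
        simp only [hp]; rw [if_neg]
        intro hxt
        exact E_disj' (Finset.mem_range.1 hs).le (Finset.mem_range.1 ht).le hne.symm hxs hxt
      · intro h; exact absurd hs h
    · rw [if_neg hx, Finset.sum_eq_zero, add_zero]
      intro s hs
      simp only [hp]; rw [if_neg]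
      intro hxs; exact hx (Finset.mem_biUnion.2 ⟨s, hs, hxs⟩)
  have hTeq : ∀ x, x ∉ U → T m f x = T m (f0 + gs) x := by
    intro x hx
    have e0 : T m f x = T m (f0 + hsum) x := congrArg (fun u => T m u x) hdec
    rw [e0, T_add, T_add, Pi.add_apply, Pi.add_apply]
    congr 1
    rw [hhs, hgs, T_sum, T_sum]
    refine Finset.sum_congr rfl fun s hs => ?_
    have hxs : x ∉ E f κ s := fun h => hx (Finset.mem_biUnion.2 ⟨s, hs, h⟩)
    have hz := T_local_zero (good_inv hG s) f κ x hxs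
    have e : T m (hp f κ s) x - T m (T (bad Ξ s) (hp f κ s)) x
        = T (fun ξ => m ξ * (1 - bad Ξ s ξ)) (hp f κ s) x := by
      rw [T_T]; unfold T
      rw [← mul_sub, ← Finset.sum_sub_distrib]
      congr 1
      exact Finset.sum_congr rfl fun ξ _ => by ring
    rw [hz] at e
    linarith
  have hf0L : ∑ x, f0 x ^ 2 ≤ κ * S := by
    rw [hS, Finset.mul_sum]
    refine Finset.sum_le_sum fun x _ => ?_
    simp only [hf0]
    split_ifs with h
    · rw [zero_pow two_ne_zero]; exact mul_nonneg hκ0.le (abs_nonneg _)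
    · rw [← sq_abs, sq]; gcongr; exact hoff x h
  have hgsL : ∑ x, gs x ^ 2 ≤ 2 * κ * Ξ.card * S := by
    have : ∀ x, gs x ^ 2 = ∑ s ∈ Finset.range n, T (bad Ξ s) (hp f κ s) x ^ 2 := by
      intro x
      refine sq_sum_disj _ _ fun s hs t ht hne => ?_
      by_cases h1 : x ∈ E f κ s
      · by_cases h2 : x ∈ E f κ t
        · exact (E_disj' (Finset.mem_range.1 hs).le (Finset.mem_range.1 ht).le hne h1 h2).elim
        · rw [T_local_zero (bad_inv Ξ t) f κ x h2, mul_zero]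
      · rw [T_local_zero (bad_inv Ξ s) f κ x h1, zero_mul]
    simp only [this]
    rw [Finset.sum_comm]
    calc _ ≤ ∑ s ∈ Finset.range n, 2 * κ * Ξ.card * ∑ x ∈ E f κ s, |f x| :=
          Finset.sum_le_sum fun s hs => gs_L2 Ξ f κ s (Finset.mem_range.1 hs)
      _ = 2 * κ * Ξ.card * ∑ s ∈ Finset.range n, ∑ x ∈ E f κ s, |f x| := by rw [Finset.mul_sum]
      _ ≤ _ := mul_le_mul_of_nonneg_left (sum_E_le f κ)
          (mul_nonneg (mul_nonneg zero_le_two hκ0.le) (Nat.cast_nonneg _))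
  have hgL : ∑ x, (f0 + gs) x ^ 2 ≤ 6 * κ * r ^ 2 * S := by
    calc ∑ x, (f0 + gs) x ^ 2 ≤ ∑ x, (2 * f0 x ^ 2 + 2 * gs x ^ 2) := by
          refine Finset.sum_le_sum fun x _ => ?_
          rw [Pi.add_apply]; nlinarith [sq_nonneg (f0 x - gs x)]
      _ = 2 * ∑ x, f0 x ^ 2 + 2 * ∑ x, gs x ^ 2 := by
          rw [Finset.sum_add_distrib, Finset.mul_sum, Finset.mul_sum]
      _ ≤ 2 * (κ * S) + 2 * (2 * κ * r ^ 2 * S) := by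
          have : 2 * κ * Ξ.card * S ≤ 2 * κ * r ^ 2 * S := by gcongr
          linarith
      _ ≤ _ := by
          have : 1 ≤ r ^ 2 := one_le_pow₀ hr
          nlinarith [mul_nonneg hκ0.le hS0]
  have hsub : (Finset.univ.filter fun x => t < |T m f x|) ⊆
      U ∪ (Finset.univ.filter fun x => t < |T m (f0 + gs) x|) := by
    intro x hx
    simp only [Finset.mem_filter, Finset.mem_univ, true_and, Finset.mem_union] at hx ⊢
    by_cases hxU : x ∈ U
    · exact Or.inl hxU
    · right; rwa [← hTeq x hxU]
  have hcard : ((Finset.univ.filter fun x => t < |T m f x|).card : ℝ) ≤ U.card +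
      (Finset.univ.filter fun x => t < |T m (f0 + gs) x|).card := by
    exact_mod_cast (Finset.card_le_card hsub).trans (Finset.card_union_le _ _)
  have hc2 := (cheb (T m (f0 + gs)) t ht).trans ((T_L2 m (f0 + gs) hm).trans hgL)
  set c2 := ((Finset.univ.filter fun x => t < |T m (f0 + gs) x|).card : ℝ)
  have h3 : c2 * t ≤ 6 * r * S := by
    have : (c2 * t) * t ≤ (6 * r * S) * t := by
      calc (c2 * t) * t = c2 * t ^ 2 := by ring
        _ ≤ _ := hc2
        _ = _ := by rw [htκ]; ring
    exact le_of_mul_le_mul_right this ht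
  have h4 : (U.card : ℝ) * t ≤ r * S := by
    calc (U.card : ℝ) * t = (U.card * κ) * r := by rw [htκ]; ring
      _ ≤ S * r := by gcongr
      _ = _ := mul_comm _ _
  calc _ ≤ (U.card + c2) * t := by gcongr
    _ = U.card * t + c2 * t := by ring
    _ ≤ r * S + 6 * r * S := add_le_add h4 h3
    _ = _ := by ring

end FW

namespace FW
variable {n : ℕ}

lemma int_low (a p : ℝ) (ha : 0 ≤ a) (hp : -1 < p) :
    Integrable ((Ioo 0 a).indicator fun t : ℝ => t ^ p) ∧
    ∫ t, (Ioo 0 a).indicator (fun t : ℝ => t ^ p) t = a ^ (p + 1) / (p + 1) := by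
  have hi : IntervalIntegrable (fun t : ℝ => t ^ p) volume 0 a :=
    intervalIntegral.intervalIntegrable_rpow' hp
  rw [intervalIntegrable_iff_integrableOn_Ioo_of_le ha] at hi
  refine ⟨hi.integrable_indicator measurableSet_Ioo, ?_⟩
  rw [integral_indicator measurableSet_Ioo, ← integral_Ioc_eq_integral_Ioo,
    ← intervalIntegral.integral_of_le ha, integral_rpow (Or.inl hp),
    Real.zero_rpow (by linarith), sub_zero]

lemma int_high (a p : ℝ) (ha : 0 < a) (hp : p < -1) :
    Integrable ((Ici a).indicator fun t : ℝ => t ^ p) ∧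
    ∫ t, (Ici a).indicator (fun t : ℝ => t ^ p) t = a ^ (p + 1) / (-(p + 1)) := by
  have hi := integrableOn_Ioi_rpow_of_lt hp ha
  rw [← integrableOn_Ici_iff_integrableOn_Ioi] at hi
  refine ⟨hi.integrable_indicator measurableSet_Ici, ?_⟩
  rw [integral_indicator measurableSet_Ici, integral_Ici_eq_integral_Ioi,
    integral_Ioi_rpow_of_lt hp ha, div_neg, neg_div]

lemma marc {m : G n → ℝ} {Ξ : Finset (G n)} (hG : Good m Ξ) (hm : ∀ ξ, |m ξ| ≤ 1)
    {r : ℝ} (hr : 1 ≤ r) (hΞ : (Ξ.card : ℝ) ≤ r ^ 2) (f : G n → ℝ) {q : ℝ} (hq1 : 1 < q)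
    (hq2 : q < 2) :
    ∑ x, |T m f x| ^ q ≤ 2 ^ q * q * (7 / (q - 1) + 1 / (2 - q)) * r ^ (2 - q)
      * ∑ x, |f x| ^ q := by
  have hr0 : 0 < r := by linarith
  let A : G n → ℝ → ℝ := fun x => (Ioo 0 (|T m f x| / 2)).indicator fun t : ℝ => t ^ (q - 1)
  let B : G n → ℝ → ℝ := fun x t => |f x| * (Ioo 0 (|f x| / r)).indicator (fun t : ℝ => t ^ (q - 2)) t
  let D : G n → ℝ → ℝ := fun x t => |f x| ^ 2 * (Ici (|f x| / r)).indicator (fun t : ℝ => t ^ (q - 3)) t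
  have hA : ∀ x, Integrable (A x) ∧ ∫ t, A x t = (|T m f x| / 2) ^ q / q := by
    intro x
    have := int_low (|T m f x| / 2) (q - 1) (by positivity) (by linarith)
    simpa using this
  have hB : ∀ x, Integrable (B x) ∧ ∫ t, B x t = r ^ (1 - q) / (q - 1) * |f x| ^ q := by
    intro x
    have := int_low (|f x| / r) (q - 2) (by positivity) (by linarith)
    refine ⟨this.1.const_mul _, ?_⟩
    simp only [B]
    rw [integral_const_mul, this.2]
    have e : q - 2 + 1 = q - 1 := by ring
    rw [e, Real.div_rpow (abs_nonneg _) hr0.le]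
    have e2 : r ^ (1 - q) = (r ^ (q - 1))⁻¹ := by rw [← Real.rpow_neg hr0.le]; congr 1; ring
    have e3 : |f x| * |f x| ^ (q - 1) = |f x| ^ q := by
      rcases (abs_nonneg (f x)).eq_or_lt with h | h
      · rw [← h, zero_mul, Real.zero_rpow (by linarith)]
      · rw [← Real.rpow_one_add' h.le (by linarith)]; congr 1; ring
    rw [e2, ← e3]; ring
  have hD : ∀ x, Integrable (D x) ∧ ∫ t, D x t = r ^ (2 - q) / (2 - q) * |f x| ^ q := by
    intro x
    rcases (abs_nonneg (f x)).eq_or_lt with h | h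
    · have : D x = fun _ => 0 := by funext t; simp only [D]; rw [← h]; simp
      rw [this, ← h, Real.zero_rpow (by linarith)]; simp
    have := int_high (|f x| / r) (q - 3) (by positivity) (by linarith)
    refine ⟨this.1.const_mul _, ?_⟩
    simp only [D]
    rw [integral_const_mul, this.2]
    have e : q - 3 + 1 = -(2 - q) := by ring
    have e2 : |f x| ^ q = |f x| ^ 2 * |f x| ^ (-(2 - q)) := by
      rw [← Real.rpow_natCast, ← Real.rpow_add h]; congr 1; push_cast; ring
    rw [e, Real.div_rpow (abs_nonneg _) hr0.le, e2, Real.rpow_neg hr0.le, neg_neg]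
    field_simp
  have hpt : ∀ t, ∑ x, A x t ≤ 7 * r * ∑ x, B x t + ∑ x, D x t := by
    intro t
    have hB0 : ∀ x, 0 ≤ B x t := fun x => mul_nonneg (abs_nonneg _)
      (indicator_nonneg (fun s hs => Real.rpow_nonneg hs.1.le _) _)
    have hD0 : ∀ x, 0 ≤ D x t := fun x => mul_nonneg (sq_nonneg _)
      (indicator_nonneg (fun s hs => Real.rpow_nonneg ((by positivity : (0:ℝ) ≤ |f x| / r).trans hs) _) _)
    rcases le_or_gt t 0 with ht | ht
    · have : ∑ x, A x t = 0 := Finset.sum_eq_zero fun x _ =>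
        indicator_of_notMem (fun h => absurd h.1 (not_lt.2 ht)) _
      rw [this]
      have h1 := Finset.sum_nonneg fun x (_ : x ∈ Finset.univ) => hB0 x
      have h2 := Finset.sum_nonneg fun x (_ : x ∈ Finset.univ) => hD0 x
      positivity
    set fh : G n → ℝ := fun x => if r * t < |f x| then f x else 0 with hfh
    set fl : G n → ℝ := fun x => if r * t < |f x| then 0 else f x with hfl
    have hdec : f = fh + fl := by
      funext x; simp only [hfh, hfl, Pi.add_apply]; split_ifs <;> simp
    have hw := weak hG hm hr hΞ fh ht
    have hc := (cheb (T m fl) t ht).trans (T_L2 m fl hm)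
    set c1 := ((Finset.univ.filter fun x => t < |T m fh x|).card : ℝ)
    set c2 := ((Finset.univ.filter fun x => t < |T m fl x|).card : ℝ)
    have hAs : ∑ x, A x t ≤ (c1 + c2) * t ^ (q - 1) := by
      have : ∀ x, A x t = if x ∈ (Finset.univ.filter fun x => 2 * t < |T m f x|)
          then t ^ (q - 1) else 0 := by
        intro x
        simp only [A, indicator, mem_Ioo, Finset.mem_filter, Finset.mem_univ, true_and, ht]
        refine if_congr ?_ rfl rfl
        rw [lt_div_iff₀ (by norm_num)]; rw [mul_comm]
      simp only [this]
      rw [Finset.sum_ite_mem, Finset.univ_inter, Finset.sum_const, nsmul_eq_mul]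
      refine mul_le_mul_of_nonneg_right ?_ (Real.rpow_nonneg ht.le _)
      have hsub : (Finset.univ.filter fun x => 2 * t < |T m f x|) ⊆
          (Finset.univ.filter fun x => t < |T m fh x|) ∪
          (Finset.univ.filter fun x => t < |T m fl x|) := by
        intro x hx
        simp only [Finset.mem_filter, Finset.mem_univ, true_and, Finset.mem_union] at hx ⊢
        have e0 : T m f x = T m fh x + T m fl x := by
          have e0 : T m f x = T m (fh + fl) x := congrArg (fun u => T m u x) hdec
          rw [e0, T_add]; rfl
        by_contra hcon
        push Not at hcon
        have := abs_add_le (T m fh x) (T m fl x)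
        rw [← e0] at this
        linarith [hcon.1, hcon.2]
      have hcc := (Finset.card_le_card hsub).trans (Finset.card_union_le _ _)
      have hcc' := (Nat.cast_le (α := ℝ)).2 hcc
      rwa [Nat.cast_add] at hcc'
    have e1 : t ^ (q - 1) = t * t ^ (q - 2) := by
      rw [← Real.rpow_one_add' ht.le (by linarith)]; congr 1; ring
    have e2 : t ^ (q - 1) = t ^ 2 * t ^ (q - 3) := by
      rw [← Real.rpow_natCast, ← Real.rpow_add ht]; congr 1; push_cast; ring
    have hBs : (∑ x, |fh x|) * t ^ (q - 2) = ∑ x, B x t := by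
      rw [Finset.sum_mul]
      refine Finset.sum_congr rfl fun x _ => ?_
      simp only [B, hfh, indicator, mem_Ioo, ht, true_and]
      have : t < |f x| / r ↔ r * t < |f x| := by rw [lt_div_iff₀ hr0, mul_comm]
      simp only [this]
      split_ifs <;> simp
    have hDs : (∑ x, fl x ^ 2) * t ^ (q - 3) = ∑ x, D x t := by
      rw [Finset.sum_mul]
      refine Finset.sum_congr rfl fun x _ => ?_
      simp only [D, hfl, indicator, mem_Ici]
      have : |f x| / r ≤ t ↔ ¬ r * t < |f x| := by rw [div_le_iff₀ hr0, mul_comm, not_lt]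
      simp only [this]
      split_ifs <;> simp
    calc _ ≤ _ := hAs
      _ = (c1 * t) * t ^ (q - 2) + (c2 * t ^ 2) * t ^ (q - 3) := by
          rw [add_mul]; nth_rewrite 1 [e1]; rw [e2]; ring
      _ ≤ (7 * r * ∑ x, |fh x|) * t ^ (q - 2) + (∑ x, fl x ^ 2) * t ^ (q - 3) := by
          gcongr
      _ = _ := by rw [hDs, mul_assoc, hBs]
  have hInteg : ∫ t, ∑ x, A x t ≤ ∫ t, (7 * r * ∑ x, B x t + ∑ x, D x t) := by
    refine integral_mono (integrable_finsetSum _ fun x _ => (hA x).1) ?_ hpt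
    exact ((integrable_finsetSum _ fun x _ => (hB x).1).const_mul _).add
      (integrable_finsetSum _ fun x _ => (hD x).1)
  rw [integral_add ((integrable_finsetSum _ fun x _ => (hB x).1).const_mul _)
      (integrable_finsetSum _ fun x _ => (hD x).1), integral_const_mul,
    integral_finsetSum _ fun x _ => (hA x).1, integral_finsetSum _ fun x _ => (hB x).1,
    integral_finsetSum _ fun x _ => (hD x).1] at hInteg
  simp only [fun x => (hA x).2, fun x => (hB x).2, fun x => (hD x).2] at hInteg
  rw [← Finset.mul_sum, ← Finset.mul_sum, ← mul_assoc, ← Finset.sum_div] at hInteg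
  have e5 : r * r ^ (1 - q) = r ^ (2 - q) := by
    rw [← Real.rpow_one_add' hr0.le (by linarith)]; congr 1; ring
  have e6 : ∑ x, (|T m f x| / 2) ^ q = (∑ x, |T m f x| ^ q) / 2 ^ q := by
    rw [Finset.sum_div]
    exact Finset.sum_congr rfl fun x _ => Real.div_rpow (abs_nonneg _) (by norm_num) _
  rw [e6, div_div, div_le_iff₀ (by positivity)] at hInteg
  refine hInteg.trans (le_of_eq ?_)
  rw [← e5]
  have : q - 1 ≠ 0 := by linarith
  have : 2 - q ≠ 0 := by linarith
  field_simp

/-- bound for q ≤ 2 -/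
lemma bound_le_two (q : ℝ) (hq1 : 1 < q) (hq2 : q ≤ 2) : ∃ C : ℝ, 0 < C ∧
    ∀ (n : ℕ) (m : G n → ℝ) (Ξ : Finset (G n)), Good m Ξ → (∀ ξ, |m ξ| ≤ 1) →
    ∀ r : ℝ, 1 ≤ r → (Ξ.card : ℝ) ≤ r ^ 2 → ∀ f : G n → ℝ,
    (∑ x, |T m f x| ^ q) ^ (1 / q) ≤ C * r ^ (2 * |1 / q - 1 / 2|) * (∑ x, |f x| ^ q) ^ (1 / q) := by
  have hq0 : 0 < q := by linarith
  rcases hq2.eq_or_lt with rfl | hq2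
  · refine ⟨1, one_pos, fun n m Ξ hG hm r hr hΞ f => ?_⟩
    simp only [sub_self, abs_zero, mul_zero, Real.rpow_zero, mul_one, one_mul]
    refine Real.rpow_le_rpow (Finset.sum_nonneg fun x _ => by positivity) ?_ (by norm_num)
    have := T_L2 m f hm
    simpa using this
  · have hK : 0 < 2 ^ q * q * (7 / (q - 1) + 1 / (2 - q)) := by
      have : 0 < q - 1 := by linarith
      have : 0 < 2 - q := by linarith
      positivity
    refine ⟨(2 ^ q * q * (7 / (q - 1) + 1 / (2 - q))) ^ (1 / q), by positivity,
      fun n m Ξ hG hm r hr hΞ f => ?_⟩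
    have h := marc hG hm hr hΞ f hq1 hq2
    have hr0 : 0 < r := by linarith
    have hs : 0 ≤ ∑ x, |f x| ^ q := Finset.sum_nonneg fun x _ => by positivity
    refine (Real.rpow_le_rpow (Finset.sum_nonneg fun x _ => by positivity) h (by positivity)).trans ?_
    rw [Real.mul_rpow (by positivity) hs, Real.mul_rpow hK.le (by positivity),
      ← Real.rpow_mul hr0.le]
    have : (2 - q) * (1 / q) = 2 * |1 / q - 1 / 2| := by
      rw [abs_of_pos]
      · field_simp
      · rw [sub_pos]; exact one_div_lt_one_div_of_lt hq0 hq2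
    rw [this]

lemma bound_all (q : ℝ) (hq1 : 1 < q) : ∃ C : ℝ, 0 < C ∧
    ∀ (n : ℕ) (m : G n → ℝ) (Ξ : Finset (G n)), Good m Ξ → (∀ ξ, |m ξ| ≤ 1) →
    ∀ r : ℝ, 1 ≤ r → (Ξ.card : ℝ) ≤ r ^ 2 → ∀ f : G n → ℝ,
    (∑ x, |T m f x| ^ q) ^ (1 / q) ≤ C * r ^ (2 * |1 / q - 1 / 2|) * (∑ x, |f x| ^ q) ^ (1 / q) := by
  rcases le_or_gt q 2 with hq2 | hq2
  · exact bound_le_two q hq1 hq2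
  have hq0 : 0 < q := by linarith
  set p := q.conjExponent with hp
  have hpq : q.HolderConjugate p := Real.HolderConjugate.conjExponent hq1
  have hp1 : 1 < p := hpq.symm.lt
  have hsum := hpq.inv_add_inv_eq_one
  have hp0 : 0 < p := by linarith
  have hp2 : p ≤ 2 := by
    have : q⁻¹ < 2⁻¹ := inv_strictAnti₀ (by norm_num) hq2
    have : 2⁻¹ ≤ p⁻¹ := by linarith
    exact (inv_le_inv₀ (by norm_num) hp0).1 this
  obtain ⟨C, hC, h⟩ := bound_le_two p hp1 hp2
  refine ⟨C, hC, fun n m Ξ hG hm r hr hΞ f => ?_⟩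
  set h' : G n → ℝ := fun x => SignType.sign (T m f x) * |T m f x| ^ (q - 1) with hh'
  have habs : ∀ x, |h' x| ^ p = |T m f x| ^ q := by
    intro x
    have e : (q - 1) * p = q := hpq.sub_one_mul_conj
    simp only [hh']
    rcases eq_or_ne (T m f x) 0 with h0 | h0
    · rw [h0]; simp [Real.zero_rpow hq0.ne', Real.zero_rpow hp0.ne']
    · have : |(SignType.sign (T m f x) : ℝ)| = 1 := by
        rcases lt_or_gt_of_ne h0 with h | h
        · simp [h]
        · simp [h]
      rw [abs_mul, this, one_mul, abs_of_nonneg (by positivity), ← Real.rpow_mul (abs_nonneg _), e]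
  have hprod : ∀ x, T m f x * h' x = |T m f x| ^ q := by
    intro x
    simp only [hh']
    rw [← mul_assoc, self_mul_sign, ← Real.rpow_one_add' (abs_nonneg _) (by linarith)]
    congr 1; ring
  set S := ∑ x, |T m f x| ^ q with hS
  have hS0 : 0 ≤ S := Finset.sum_nonneg fun x _ => by positivity
  have hr0 : 0 < r := by linarith
  have e2 : |1 / p - 1 / 2| = |1 / q - 1 / 2| := by
    have : 1 / p - 1 / 2 = -(1 / q - 1 / 2) := by
      rw [one_div, one_div q]; linarith
    rw [this, abs_neg]
  have hF0 : 0 ≤ ∑ x, |f x| ^ q := Finset.sum_nonneg fun x _ => by positivity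
  have key : S ≤ (∑ x, |f x| ^ q) ^ (1 / q) * (C * r ^ (2 * |1 / q - 1 / 2|) * S ^ (1 / p)) := by
    calc S = ∑ x, T m f x * h' x := Finset.sum_congr rfl fun x _ => (hprod x).symm
      _ = ∑ x, f x * T m h' x := T_selfadj m f h'
      _ ≤ (∑ x, |f x| ^ q) ^ (1 / q) * (∑ x, |T m h' x| ^ p) ^ (1 / p) :=
          Real.inner_le_Lp_mul_Lq _ _ _ hpq
      _ ≤ _ := by
          refine mul_le_mul_of_nonneg_left ?_ (by positivity)
          have := h n m Ξ hG hm r hr hΞ h'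
          simpa only [habs, e2] using this
  rcases hS0.eq_or_lt with h0 | h0
  · rw [← h0, Real.zero_rpow (by positivity)]; positivity
  · have e3 : S = S ^ (1 / q) * S ^ (1 / p) := by
      rw [← Real.rpow_add h0, one_div, one_div, hsum, Real.rpow_one]
    have hSp : 0 < S ^ (1 / p) := by positivity
    refine le_of_mul_le_mul_right ?_ hSp
    rw [← e3]
    refine key.trans (le_of_eq ?_); ring

end FW

namespace WR

lemma digit_01 (n : ℤ) (x : ℝ) : digit n x = 0 ∨ digit n x = 1 := by
  unfold digit; exact Int.emod_two_eq_zero_or_one _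

lemma digit_zero_of_lt {n : ℤ} {x : ℝ} (h0 : 0 ≤ x) (h : x < 2 ^ n) : digit n x = 0 := by
  have hp : (0 : ℝ) < 2 ^ n := by positivity
  have : ⌊x / 2 ^ n⌋ = 0 := by
    rw [Int.floor_eq_zero_iff]; exact ⟨by positivity, by rwa [div_lt_one hp]⟩
  rw [digit, this]; rfl

lemma digit_zero_of_le {n k : ℤ} {x : ℝ} (h0 : 0 ≤ x) (h : x < 2 ^ k) (hk : k ≤ n) :
    digit n x = 0 :=
  digit_zero_of_lt h0 (h.trans_le (zpow_le_zpow_right₀ (by norm_num) hk))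

lemma exists_zpow_gt (x : ℝ) : ∃ L : ℕ, x < 2 ^ (L : ℤ) := by
  obtain ⟨L, hL⟩ := pow_unbounded_of_one_lt x (by norm_num : (1 : ℝ) < 2)
  exact ⟨L, by simpa using hL⟩

lemma wMulDigit_eq (n : ℤ) (x y : ℝ) (S : Finset ℤ)
    (hS : ∀ m, m ∉ S → digit (n - m) x * digit m y = 0) :
    wMulDigit n x y = (∑ m ∈ S, digit (n - m) x * digit m y) % 2 := by
  unfold wMulDigit
  rw [tsum_eq_sum (s := S)]
  · rw [← Int.cast_sum, Int.floor_intCast]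
  · intro m hm; rw [hS m hm]; simp

lemma wMulDigit_comm (n : ℤ) (x y : ℝ) : wMulDigit n x y = wMulDigit n y x := by
  unfold wMulDigit
  congr 2
  rw [← (Equiv.subLeft n).tsum_eq]
  refine tsum_congr fun m => ?_
  simp [mul_comm]

/-- digit extraction -/
lemma digit_tsum (a : ℤ → ℤ) (ha : ∀ n, a n = 0 ∨ a n = 1) (k : ℤ) (N : ℕ)
    (hN : ∀ n, k + 1 + N ≤ n → a n = 0) (hinf : ∃ n < k, a n = 0) :
    digit k (∑' n : ℤ, (a n : ℝ) * 2 ^ n) = a k := by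
  have h01 : ∀ n, 0 ≤ (a n : ℝ) ∧ (a n : ℝ) ≤ 1 := by
    intro n; rcases ha n with h | h <;> rw [h] <;> simp
  let e : ℕ → ℤ := fun i => k + N - i
  have hinj : Function.Injective e := by intro i j h; simp only [e] at h; omega
  have hsupp : Function.support (fun n : ℤ => (a n : ℝ) * 2 ^ n) ⊆ Set.range e := by
    intro n hn
    rw [Function.mem_support] at hn
    have : n < k + 1 + N := by
      by_contra hcon; push Not at hcon
      exact hn (by rw [hN n hcon]; simp)
    exact ⟨(k + N - n).toNat, by simp only [e]; omega⟩
  rw [← hinj.tsum_eq hsupp]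
  have hgeo : ∀ c : ℤ, Summable (fun i : ℕ => (2 : ℝ) ^ (c - i)) ∧
      ∑' i : ℕ, (2 : ℝ) ^ (c - i) = 2 ^ (c + 1) := by
    intro c
    have h1 : ∀ i : ℕ, (2 : ℝ) ^ (c - i) = 2 ^ c * (1 / 2) ^ i := by
      intro i; rw [zpow_sub₀ (by norm_num)]; simp [div_eq_mul_inv]
    simp only [h1]
    refine ⟨summable_geometric_two.mul_left _, ?_⟩
    rw [tsum_mul_left, tsum_geometric_two, zpow_add₀ (by norm_num)]; simp
  have hsum : ∀ c : ℤ, Summable (fun i : ℕ => (a (c - i) : ℝ) * 2 ^ (c - i)) := by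
    intro c
    refine Summable.of_nonneg_of_le (fun i => mul_nonneg (h01 _).1 (by positivity)) (fun i => ?_)
      (hgeo c).1
    exact mul_le_of_le_one_left (by positivity) (h01 _).2
  have hs := (hsum (k + N)).sum_add_tsum_nat_add (N + 1)
  change digit k (∑' i : ℕ, (a (k + N - i) : ℝ) * 2 ^ (k + N - (i : ℤ))) = a k
  rw [← hs, Finset.sum_range_succ]
  have htail : (fun i : ℕ => (a (k + N - ((i + (N + 1) : ℕ) : ℤ)) : ℝ) * 2 ^ (k + N - ((i + (N + 1) : ℕ) : ℤ)))
      = fun i : ℕ => (a (k - 1 - i) : ℝ) * 2 ^ (k - 1 - (i : ℤ)) := by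
    funext i
    have : k + N - ((i + (N + 1) : ℕ) : ℤ) = k - 1 - i := by push_cast; ring
    rw [this]
  rw [htail]
  set t := ∑' i : ℕ, (a (k - 1 - i) : ℝ) * 2 ^ (k - 1 - (i : ℤ)) with ht
  have ht0 : 0 ≤ t := tsum_nonneg fun i => mul_nonneg (h01 _).1 (by positivity)
  have ht1 : t < 2 ^ k := by
    have h2 := (hgeo (k - 1)).2
    rw [sub_add_cancel] at h2
    rw [← h2]
    obtain ⟨n, hn, hn0⟩ := hinf
    refine Summable.tsum_lt_tsum (i := (k - 1 - n).toNat) (fun i => ?_) ?_ (hsum _) (hgeo _).1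
    · exact mul_le_of_le_one_left (by positivity) (h01 _).2
    · have : k - 1 - ((k - 1 - n).toNat : ℤ) = n := by omega
      rw [this, hn0]; simp; positivity
  have hhead : ∑ i ∈ Finset.range N, (a (k + N - i) : ℝ) * 2 ^ (k + N - (i : ℤ))
      = 2 ^ k * ((2 * ∑ i ∈ Finset.range N, a (k + N - i) * 2 ^ (N - 1 - i) : ℤ) : ℝ) := by
    push_cast
    rw [Finset.mul_sum, Finset.mul_sum]
    refine Finset.sum_congr rfl fun i hi => ?_
    have hi := Finset.mem_range.1 hi
    have : k + N - (i : ℤ) = k + 1 + ((N - 1 - i : ℕ) : ℤ) := by omega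
    rw [this, zpow_add₀ (by norm_num), zpow_add₀ (by norm_num), zpow_natCast]
    ring
  rw [hhead]
  have hkN : k + N - (N : ℤ) = k := by ring
  rw [hkN]
  have hp : (0 : ℝ) < 2 ^ k := by positivity
  unfold digit
  set z := ∑ i ∈ Finset.range N, a (k + N - i) * 2 ^ (N - 1 - i)
  have : ⌊(2 ^ k * ((2 * z : ℤ) : ℝ) + (a k : ℝ) * 2 ^ k + t) / 2 ^ k⌋ = 2 * z + a k := by
    have e1 : (2 ^ k * ((2 * z : ℤ) : ℝ) + (a k : ℝ) * 2 ^ k + t) / 2 ^ k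
      = ((2 * z + a k : ℤ) : ℝ) + t / 2 ^ k := by push_cast; field_simp
    rw [e1, Int.floor_intCast_add, Int.floor_eq_zero_iff.2, add_zero]
    exact ⟨by positivity, by rwa [div_lt_one hp]⟩
  rw [this]
  rcases ha k with h | h <;> rw [h] <;> omega

lemma wMulDigit_01 (n : ℤ) (x y : ℝ) : wMulDigit n x y = 0 ∨ wMulDigit n x y = 1 := by
  unfold wMulDigit; exact Int.emod_two_eq_zero_or_one _

/-- floors step down -/
lemma floor_step (x : ℝ) (k : ℤ) : ⌊x / 2 ^ k⌋ = 2 * ⌊x / 2 ^ (k + 1)⌋ + digit k x := by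
  have h : ⌊x / 2 ^ (k + 1)⌋ = ⌊x / 2 ^ k⌋ / 2 := by
    rw [zpow_add₀ (by norm_num), zpow_one, ← div_div]
    exact Int.floor_div_natCast _ 2
  unfold digit; rw [h]; omega

lemma floor_up (x : ℝ) (k : ℤ) (j : ℕ) : ⌊x / 2 ^ (k + j)⌋ = ⌊x / 2 ^ k⌋ / ((2 ^ j : ℕ) : ℤ) := by
  rw [zpow_add₀ (by norm_num), ← div_div]
  have := Int.floor_div_natCast (x / 2 ^ k) (2 ^ j)
  rw [← this]; push_cast; rw [zpow_natCast]

/-- sign kernel -/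
def W (ξ x : ℝ) : ℝ := (-1 : ℝ) ^ (wMulDigit (-1) ξ x)

lemma W_comm (ξ x : ℝ) : W ξ x = W x ξ := by unfold W; rw [wMulDigit_comm]

lemma W_cases (ξ x : ℝ) : W ξ x = 1 ∨ W ξ x = -1 := by
  unfold W; rcases wMulDigit_01 (-1) ξ x with h | h <;> rw [h] <;> simp

lemma W_abs (ξ x : ℝ) : |W ξ x| = 1 := by
  rcases W_cases ξ x with h | h <;> rw [h] <;> simp

lemma wMulDigit_zero_of_ge {ξ x : ℝ} (hξ : 0 ≤ ξ) (hx : 0 ≤ x) {K L : ℤ} (hK : ξ < 2 ^ K)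
    (hL : x < 2 ^ L) {n : ℤ} (hn : K + L ≤ n) : wMulDigit n ξ x = 0 := by
  rw [wMulDigit_eq n ξ x ∅]
  · simp
  · intro m _
    rcases le_or_gt L m with h | h
    · rw [digit_zero_of_le hx hL h, mul_zero]
    · rw [digit_zero_of_le hξ hK (by omega), zero_mul]

lemma bad_countable (ξ : ℝ) (hξ : 0 < ξ) (N : ℤ) :
    {x : ℝ | 0 ≤ x ∧ ∀ n ≤ N, wMulDigit n ξ x = 1}.Countable := by
  set t := Int.log 2 ξ
  have ht1 : (2 : ℝ) ^ t ≤ ξ := by exact_mod_cast Int.zpow_log_le_self (by norm_num : 1 < 2) hξ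
  have ht2 : ξ < (2 : ℝ) ^ (t + 1) := by
    exact_mod_cast Int.lt_zpow_succ_log_self (by norm_num : 1 < 2) ξ
  have hp : (0 : ℝ) < 2 ^ t := by positivity
  have hdt : digit t ξ = 1 := by
    have : ⌊ξ / 2 ^ t⌋ = 1 := by
      rw [Int.floor_eq_iff]; push_cast
      refine ⟨by rwa [le_div_iff₀ hp, one_mul], ?_⟩
      rw [div_lt_iff₀ hp]; rw [zpow_add₀ (by norm_num), zpow_one] at ht2; linarith
    rw [digit, this]; rfl
  set m0 := N - t + 1
  refine Set.countable_of_injective_of_countable_image (f := fun x : ℝ => ⌊x / 2 ^ m0⌋) ?_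
    (Set.to_countable _)
  rintro x ⟨hx0, hx⟩ y ⟨hy0, hy⟩ hxy
  simp only at hxy
  have key : ∀ j : ℕ, ⌊x / 2 ^ (m0 - j)⌋ = ⌊y / 2 ^ (m0 - j)⌋ := by
    intro j
    induction j with
    | zero => simpa using hxy
    | succ j ih =>
      set k := m0 - ((j + 1 : ℕ) : ℤ) with hk
      have hk1 : m0 - (j : ℤ) = k + 1 := by rw [hk]; push_cast; ring
      rw [hk1] at ih
      have hdig : ∀ m, k < m → digit m x = digit m y := by
        intro m hm
        have : m = (k + 1) + ((m - (k + 1)).toNat : ℤ) := by omega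
        unfold digit
        rw [this, floor_up, floor_up, ih]
      rw [floor_step x k, floor_step y k, ih]
      congr 1
      obtain ⟨L1, hL1⟩ := exists_zpow_gt x
      obtain ⟨L2, hL2⟩ := exists_zpow_gt y
      set R : ℤ := max (max (L1 : ℤ) L2) k with hR
      have hS : ∀ z : ℝ, 0 ≤ z → z < 2 ^ R → wMulDigit (k + t) ξ z
          = (digit k z + ∑ m ∈ Finset.Ioc k R, digit (k + t - m) ξ * digit m z) % 2 := by
        intro z hz0 hz
        rw [wMulDigit_eq (k + t) ξ z (insert k (Finset.Ioc k R)), Finset.sum_insert (by simp)]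
        · congr 2
          rw [add_sub_cancel_left, hdt, one_mul]
        · intro m hm
          rw [Finset.mem_insert, Finset.mem_Ioc] at hm
          push Not at hm
          rcases lt_or_ge m k with h | h
          · rw [digit_zero_of_le hξ.le ht2 (by omega), zero_mul]
          · have : R < m := hm.2 (lt_of_le_of_ne h (Ne.symm hm.1))
            rw [digit_zero_of_le hz0 hz this.le, mul_zero]
      have hx2 := hS x hx0 (hL1.trans_le (zpow_le_zpow_right₀ (by norm_num) (by simp [hR])))
      have hy2 := hS y hy0 (hL2.trans_le (zpow_le_zpow_right₀ (by norm_num) (by simp [hR])))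
      rw [hx (k + t) (by omega)] at hx2
      rw [hy (k + t) (by omega)] at hy2
      have hrest : ∑ m ∈ Finset.Ioc k R, digit (k + t - m) ξ * digit m x
          = ∑ m ∈ Finset.Ioc k R, digit (k + t - m) ξ * digit m y :=
        Finset.sum_congr rfl fun m hm => by rw [hdig m (Finset.mem_Ioc.1 hm).1]
      rw [hrest] at hx2
      rcases digit_01 k x with h1 | h1 <;> rcases digit_01 k y with h2 | h2 <;>
        rw [h1] at hx2 ⊢ <;> rw [h2] at hy2 ⊢ <;> omega
  by_contra hne
  have hpos : 0 < |x - y| := abs_pos.2 (sub_ne_zero.2 hne)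
  have hlt : ∀ j : ℕ, |x - y| < 2 ^ m0 * (1 / 2) ^ j := by
    intro j
    have := Int.abs_sub_lt_one_of_floor_eq_floor (key j)
    rw [← sub_div, abs_div, abs_of_pos (by positivity : (0 : ℝ) < 2 ^ (m0 - (j : ℤ))),
      div_lt_one (by positivity)] at this
    rw [zpow_sub₀ (by norm_num)] at this
    simpa [div_eq_mul_inv] using this
  have hlim : Tendsto (fun j : ℕ => (2 : ℝ) ^ m0 * (1 / 2) ^ j) atTop (nhds (2 ^ m0 * 0)) :=
    (tendsto_pow_atTop_nhds_zero_of_lt_one (by norm_num) (by norm_num)).const_mul _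
  have := ge_of_tendsto' hlim fun j => (hlt j).le
  rw [mul_zero] at this
  linarith

lemma walshe_ae (ξ : ℝ) (hξ : 0 ≤ ξ) : ∀ᵐ x ∂μplus, walshe (wMul ξ x) = W ξ x := by
  unfold μplus
  rw [ae_restrict_iff' measurableSet_Ici]
  have hgood : ∀ x : ℝ, 0 ≤ x → (∀ N : ℤ, ∃ n ≤ N, wMulDigit n ξ x = 0) →
      walshe (wMul ξ x) = W ξ x := by
    intro x hx h
    unfold walshe W wMul
    congr 1
    obtain ⟨K, hK⟩ := exists_zpow_gt ξ
    obtain ⟨L, hL⟩ := exists_zpow_gt x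
    refine digit_tsum (fun n => wMulDigit n ξ x) (fun n => wMulDigit_01 n ξ x) (-1) (K + L)
      (fun n hn => wMulDigit_zero_of_ge hξ hx hK hL (by push_cast at hn; omega)) ?_
    obtain ⟨n, hn, h0⟩ := h (-2)
    exact ⟨n, by omega, h0⟩
  rcases hξ.eq_or_lt with h0 | hpos
  · refine Filter.Eventually.of_forall fun x hx => hgood x hx fun N => ⟨N, le_rfl, ?_⟩
    rw [← h0, wMulDigit_eq N 0 x ∅]
    · simp
    · intro m _; simp [digit]
  · have hc : (⋃ N : ℤ, {x : ℝ | 0 ≤ x ∧ ∀ n ≤ N, wMulDigit n ξ x = 1}).Countable :=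
      Set.countable_iUnion fun N => bad_countable ξ hpos N
    have := hc.ae_notMem volume
    filter_upwards [this] with x hx hx0
    refine hgood x hx0 fun N => ?_
    by_contra hcon
    push Not at hcon
    refine hx (Set.mem_iUnion.2 ⟨N, hx0, fun n hn => ?_⟩)
    exact (wMulDigit_01 n ξ x).resolve_left (hcon n hn)

lemma walshFT_eq (f : ℝ → ℝ) (ξ : ℝ) (hξ : 0 ≤ ξ) : walshFT f ξ = ∫ x, W ξ x * f x ∂μplus := by
  unfold walshFT
  refine integral_congr_ae ?_
  filter_upwards [walshe_ae ξ hξ] with x hx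
  rw [hx]

lemma digit_nat (K i : ℕ) (x : ℝ) (hx : 0 ≤ x) :
    digit (-(K : ℤ) + i) x = ((⌊x * 2 ^ K⌋₊ / 2 ^ i % 2 : ℕ) : ℤ) := by
  unfold digit
  rw [floor_up]
  have : x / 2 ^ (-(K : ℤ)) = x * 2 ^ K := by rw [zpow_neg, div_inv_eq_mul, zpow_natCast]
  rw [this]
  have h2 : (⌊x * 2 ^ K⌋₊ : ℤ) = ⌊x * 2 ^ K⌋ := Int.natCast_floor_eq_floor (by positivity)
  rw [← h2]; push_cast; rfl

/-- bits of a natural number, from the low end -/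
def lo (n : ℕ) (j : ℕ) : FW.G n := fun i => ⟨j / 2 ^ i.val % 2, Nat.mod_lt _ (by norm_num)⟩
/-- bits of a natural number, from the high end -/
def hi (n : ℕ) (j : ℕ) : FW.G n := fun i => ⟨j / 2 ^ (n - 1 - i.val) % 2, Nat.mod_lt _ (by norm_num)⟩

lemma W_eq_chi (K L : ℕ) (ξ x : ℝ) (hξ : 0 ≤ ξ) (hx : 0 ≤ x) (hK : ξ < 2 ^ K) (hL : x < 2 ^ L) :
    W ξ x = FW.chi (hi (K + L) ⌊ξ * 2 ^ L⌋₊) (lo (K + L) ⌊x * 2 ^ K⌋₊) := by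
  have hsum : wMulDigit (-1) ξ x = (∑ i : Fin (K + L),
      digit (-(L : ℤ) + ((K + L - 1 - i.val : ℕ) : ℤ)) ξ * digit (-(K : ℤ) + (i.val : ℤ)) x) % 2 := by
    rw [wMulDigit_eq (-1) ξ x (Finset.univ.image fun i : Fin (K + L) => -(K : ℤ) + (i.val : ℤ)),
      Finset.sum_image]
    · congr 1
      refine Finset.sum_congr rfl fun i _ => ?_
      congr 2
      have := i.2
      omega
    · intro i _ j _ h
      ext; simp only at h; omega
    · intro m hm
      rcases le_or_gt (L : ℤ) m with h | h
      · rw [digit_zero_of_le hx (k := L) (by exact_mod_cast hL) h, mul_zero]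
      · rw [digit_zero_of_le hξ (k := K) (by exact_mod_cast hK), zero_mul]
        by_contra hcon
        apply hm
        rw [Finset.mem_image]
        exact ⟨⟨(m + K).toNat, by omega⟩, Finset.mem_univ _, by simp only; omega⟩
  have hpar : ∀ z : ℤ, (-1 : ℝ) ^ (z % 2) = (-1) ^ z := by
    intro z
    conv_rhs => rw [← Int.emod_add_mul_ediv z 2, zpow_add₀ (by norm_num), zpow_mul]
    simp
  unfold W
  rw [hsum, hpar]
  unfold FW.chi
  have hprod : ∀ (S : Finset (Fin (K + L))) (u : Fin (K + L) → ℤ),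
      (-1 : ℝ) ^ (∑ i ∈ S, u i) = ∏ i ∈ S, (-1 : ℝ) ^ (u i) := by
    intro S u
    induction S using Finset.induction_on with
    | empty => simp
    | insert a S ha ih => rw [Finset.sum_insert ha, Finset.prod_insert ha, zpow_add₀ (by norm_num), ih]
  rw [hprod]
  refine Finset.prod_congr rfl fun i _ => ?_
  rw [digit_nat L _ ξ hξ, digit_nat K _ x hx]
  have aux : ∀ (a b : ℕ) (ha : a < 2) (hb : b < 2),
      (-1 : ℝ) ^ ((a : ℤ) * (b : ℤ)) = FW.sg ⟨a, ha⟩ ⟨b, hb⟩ := by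
    intro a b ha hb
    interval_cases a <;> interval_cases b <;> simp [FW.sg]
  exact aux _ _ _ _

lemma W_measurable (ξ : ℝ) (hξ : 0 ≤ ξ) : AEStronglyMeasurable (W ξ) μplus := by
  obtain ⟨K, hK⟩ := exists_zpow_gt ξ
  have hm : Measurable (fun x : ℝ => W ξ ((⌊x * 2 ^ K⌋ : ℤ) / 2 ^ K : ℝ)) := by
    have h1 : Measurable (fun z : ℤ => W ξ ((z : ℝ) / 2 ^ K)) := measurable_from_top
    exact h1.comp (Int.measurable_floor.comp (measurable_id.mul_const _))
  refine ⟨_, hm.stronglyMeasurable, ?_⟩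
  unfold μplus
  rw [Filter.EventuallyEq, ae_restrict_iff' measurableSet_Ici]
  refine Filter.Eventually.of_forall fun x hx => ?_
  have hx : 0 ≤ x := hx
  unfold W
  congr 1
  unfold wMulDigit
  congr 2
  refine tsum_congr fun m => ?_
  rcases le_or_gt (-(K : ℤ)) m with h | h
  · congr 2
    have : m = -(K : ℤ) + ((m + K).toNat : ℤ) := by omega
    unfold digit
    rw [this, floor_up, floor_up]
    congr 2
    have : (2 : ℝ) ^ (-(K : ℤ)) = (2 ^ K)⁻¹ := by rw [zpow_neg, zpow_natCast]
    rw [this, div_inv_eq_mul, div_inv_eq_mul, div_mul_cancel₀ _ (by positivity), Int.floor_intCast]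
  · rw [digit_zero_of_le hξ hK (by omega)]; simp

end WR

namespace WR

lemma lo_inj (n : ℕ) {j k : ℕ} (hj : j < 2 ^ n) (hk : k < 2 ^ n) (h : lo n j = lo n k) : j = k := by
  apply Nat.eq_of_testBit_eq
  intro i
  rcases lt_or_ge i n with hi | hi
  · have := congrFun h ⟨i, hi⟩
    unfold lo at this
    simp only [Fin.mk.injEq] at this
    rw [Nat.testBit_eq_decide_div_mod_eq, Nat.testBit_eq_decide_div_mod_eq, this]
  · rw [Nat.testBit_lt_two_pow (hj.trans_le (Nat.pow_le_pow_right (by norm_num) hi)),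
      Nat.testBit_lt_two_pow (hk.trans_le (Nat.pow_le_pow_right (by norm_num) hi))]

lemma hi_inj (n : ℕ) {j k : ℕ} (hj : j < 2 ^ n) (hk : k < 2 ^ n) (h : hi n j = hi n k) : j = k := by
  apply lo_inj n hj hk
  funext i
  have := congrFun h (Fin.rev i)
  unfold hi at this
  unfold lo
  have e : n - 1 - (Fin.rev i).val = i.val := by
    rw [Fin.val_rev]; have := i.2; omega
  simp only [e] at this
  exact this

lemma hi_of_div (n s : ℕ) (hs : s ≤ n) {c e : ℕ} (h : c / 2 ^ (n - s) = e / 2 ^ (n - s)) (i : Fin n)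
    (hi' : i.val < s) : hi n c i = hi n e i := by
  unfold hi
  simp only [Fin.mk.injEq]
  have e1 : n - 1 - i.val = (n - s) + (s - 1 - i.val) := by omega
  rw [e1, pow_add, ← Nat.div_div_eq_div_mul, ← Nat.div_div_eq_div_mul, h]

lemma div_of_hi (n s : ℕ) (hs : s ≤ n) {c e : ℕ} (hc : c < 2 ^ n) (he : e < 2 ^ n)
    (h : ∀ i : Fin n, i.val < s → hi n c i = hi n e i) : c / 2 ^ (n - s) = e / 2 ^ (n - s) := by
  apply Nat.eq_of_testBit_eq
  intro k
  rw [Nat.testBit_eq_decide_div_mod_eq, Nat.testBit_eq_decide_div_mod_eq,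
    Nat.div_div_eq_div_mul, Nat.div_div_eq_div_mul, ← pow_add]
  rcases lt_or_ge k s with hk | hk
  · have := h ⟨s - 1 - k, by omega⟩ (by simp only; omega)
    unfold hi at this
    simp only [Fin.mk.injEq] at this
    have e1 : n - 1 - (s - 1 - k) = n - s + k := by omega
    rw [e1] at this
    rw [this]
  · have hle : 2 ^ n ≤ 2 ^ (n - s + k) := Nat.pow_le_pow_right (by norm_num) (by omega)
    rw [Nat.div_eq_of_lt (hc.trans_le hle), Nat.div_eq_of_lt (he.trans_le hle)]

def loE (n : ℕ) : Fin (2 ^ n) ≃ FW.G n := Equiv.ofBijective (fun j => lo n j.val) (by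
  rw [Fintype.bijective_iff_injective_and_card]
  exact ⟨fun a b h => Fin.ext (lo_inj n a.2 b.2 h), by simp⟩)

def hiE (n : ℕ) : Fin (2 ^ n) ≃ FW.G n := Equiv.ofBijective (fun j => hi n j.val) (by
  rw [Fintype.bijective_iff_injective_and_card]
  exact ⟨fun a b h => Fin.ext (hi_inj n a.2 b.2 h), by simp⟩)

lemma loE_apply (n : ℕ) (j : Fin (2 ^ n)) : loE n j = lo n j.val := rfl
lemma hiE_apply (n : ℕ) (j : Fin (2 ^ n)) : hiE n j = hi n j.val := rfl

lemma good_cells (n : ℕ) (mc : ℕ → ℝ) (X : Finset ℕ)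
    (h : ∀ p c c', c < 2 ^ n → c' < 2 ^ n → c / 2 ^ p = c' / 2 ^ p →
      (∀ e ∈ X, e / 2 ^ p ≠ c / 2 ^ p) → mc c = mc c') :
    FW.Good (n := n) (fun ξ => mc ((hiE n).symm ξ).val) (X.image (hi n)) := by
  intro s ξ hξ i hi'
  have hs : s ≤ n := by have := i.2; omega
  symm
  refine h (n - s) _ _ (Fin.is_lt _) (Fin.is_lt _) ?_ ?_
  · apply div_of_hi n s hs (Fin.is_lt _) (Fin.is_lt _)
    intro k hk
    rw [← hiE_apply, ← hiE_apply, Equiv.apply_symm_apply, Equiv.apply_symm_apply, Pi.add_apply,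
      Pi.single_apply, if_neg (by rintro rfl; omega), add_zero]
  · intro e he hcon
    apply hξ (hi n e) (Finset.mem_image_of_mem _ he)
    unfold FW.J
    rw [Finset.mem_filter]
    refine ⟨Finset.mem_univ _, fun k hk => ?_⟩
    rw [hi_of_div n s hs hcon k hk, ← hiE_apply, Equiv.apply_symm_apply]

/-- The discrete operator in cell coordinates. -/
def V (n : ℕ) (mc γ : ℕ → ℝ) (j : ℕ) : ℝ :=
  ∑ c ∈ Finset.range (2 ^ n), FW.chi (hi n c) (lo n j) *
    (mc c * ∑ i ∈ Finset.range (2 ^ n), FW.chi (hi n c) (lo n i) * γ i)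

lemma V_eq (n : ℕ) (mc γ : ℕ → ℝ) (j : Fin (2 ^ n)) : V n mc γ j.val = 2 ^ n *
    FW.T (fun ξ => mc ((hiE n).symm ξ).val) (fun x => γ ((loE n).symm x).val) (loE n j) := by
  unfold V FW.T FW.ft
  rw [← mul_assoc, mul_inv_cancel₀ (by positivity), one_mul, Finset.sum_range,
    ← (hiE n).sum_comp]
  refine Finset.sum_congr rfl fun c _ => ?_
  rw [Finset.sum_range, ← (loE n).sum_comp]
  simp only [Equiv.symm_apply_apply]
  rfl

lemma V_smul (n : ℕ) (a : ℝ) (mc γ : ℕ → ℝ) (j : ℕ) :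
    V n (fun c => a * mc c) γ j = a * V n mc γ j := by
  unfold V
  rw [Finset.mul_sum]
  exact Finset.sum_congr rfl fun c _ => by ring

lemma V_bound (q : ℝ) (hq1 : 1 < q) : ∃ C : ℝ, 0 < C ∧ ∀ (n N : ℕ) (mc : ℕ → ℝ) (X : Finset ℕ)
    (B : ℝ), 0 ≤ B → 1 ≤ N → X.card ≤ N * 2 → (∀ c < 2 ^ n, |mc c| ≤ B) →
    (∀ p c c', c < 2 ^ n → c' < 2 ^ n → c / 2 ^ p = c' / 2 ^ p →
      (∀ e ∈ X, e / 2 ^ p ≠ c / 2 ^ p) → mc c = mc c') → ∀ γ : ℕ → ℝ,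
    ∑ j ∈ Finset.range (2 ^ n), |V n mc γ j| ^ q ≤
      (2 ^ n * (C * (N : ℝ) ^ |1 / q - 1 / 2| * B)) ^ q *
        ∑ j ∈ Finset.range (2 ^ n), |γ j| ^ q := by
  obtain ⟨C, hC, H⟩ := FW.bound_all q hq1
  set a := |1 / q - 1 / 2| with ha
  have ha0 : 0 ≤ a := abs_nonneg _
  have hq0 : 0 < q := by linarith
  refine ⟨C * 2 ^ a, by positivity, ?_⟩
  intro n N mc X B hB hN hX hmc hg γ
  have hN' : (1 : ℝ) ≤ N := by exact_mod_cast hN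
  rcases hB.eq_or_lt with rfl | hB
  · have : ∀ j, V n mc γ j = 0 := by
      intro j
      unfold V
      refine Finset.sum_eq_zero fun c hc => ?_
      have := hmc c (Finset.mem_range.1 hc)
      rw [abs_eq_zero.1 (le_antisymm this (abs_nonneg _))]; simp
    simp only [this, abs_zero, Real.zero_rpow hq0.ne', Finset.sum_const_zero]
    positivity
  set m' : ℕ → ℝ := fun c => B⁻¹ * mc c with hm'
  have h1 := H n (fun ξ => m' ((hiE n).symm ξ).val) (X.image (hi n))
    (good_cells n m' X fun p c c' h1 h2 h3 h4 => by simp only [hm']; rw [hg p c c' h1 h2 h3 h4])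
    (fun ξ => by
      simp only [hm']
      rw [abs_mul, abs_of_pos (inv_pos.2 hB), inv_mul_le_iff₀ hB, mul_one]
      exact hmc _ (Fin.is_lt _))
    (√(2 * N)) (by rw [Real.one_le_sqrt]; linarith)
    (by
      rw [Real.sq_sqrt (by positivity)]
      have := (Finset.card_image_le (s := X) (f := hi n)).trans hX
      have : (((X.image (hi n)).card : ℕ) : ℝ) ≤ ((N * 2 : ℕ) : ℝ) := by exact_mod_cast this
      push_cast at this; linarith)
    (fun x => γ ((loE n).symm x).val)
  have hr : (√(2 * N) : ℝ) ^ (2 * a) = 2 ^ a * (N : ℝ) ^ a := by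
    rw [Real.rpow_mul (Real.sqrt_nonneg _), Real.rpow_two, Real.sq_sqrt (by positivity),
      Real.mul_rpow (by norm_num) (by positivity)]
  rw [hr] at h1
  have hS : ∑ x, |γ ((loE n).symm x).val| ^ q = ∑ j ∈ Finset.range (2 ^ n), |γ j| ^ q := by
    rw [Finset.sum_range, ← (loE n).sum_comp]
    simp only [Equiv.symm_apply_apply]
  rw [hS] at h1
  have h2 : ∑ j ∈ Finset.range (2 ^ n), |V n mc γ j| ^ q = (2 ^ n * B) ^ q *
      ∑ x, |FW.T (fun ξ => m' ((hiE n).symm ξ).val) (fun x => γ ((loE n).symm x).val) x| ^ q := by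
    rw [Finset.sum_range, ← (loE n).sum_comp, Finset.mul_sum]
    refine Finset.sum_congr rfl fun j _ => ?_
    have e : mc = fun c => B * m' c := by
      funext c; simp only [hm']; field_simp
    rw [← Real.mul_rpow (by positivity) (abs_nonneg _), e, V_smul, V_eq, abs_mul, abs_mul,
      abs_of_pos hB, abs_of_pos (by positivity : (0:ℝ) < 2 ^ n)]
    congr 1; ring
  rw [h2]
  set S := ∑ x, |FW.T (fun ξ => m' ((hiE n).symm ξ).val) (fun x => γ ((loE n).symm x).val) x| ^ q
  set R := ∑ j ∈ Finset.range (2 ^ n), |γ j| ^ q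
  have hS0 : 0 ≤ S := Finset.sum_nonneg fun _ _ => by positivity
  have hR0 : 0 ≤ R := Finset.sum_nonneg fun _ _ => by positivity
  have h3 := Real.rpow_le_rpow (by positivity) h1 hq0.le
  rw [← Real.rpow_mul hS0, Real.mul_rpow (by positivity) (by positivity), ← Real.rpow_mul hR0,
    one_div_mul_cancel hq0.ne', Real.rpow_one, Real.rpow_one] at h3
  calc (2 ^ n * B) ^ q * S ≤ (2 ^ n * B) ^ q * ((C * (2 ^ a * (N : ℝ) ^ a)) ^ q * R) := by gcongr
    _ = _ := by
      rw [← mul_assoc, ← Real.mul_rpow (by positivity) (by positivity)]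
      congr 2; ring

/-- Dyadic cell of length `2^{-K}`. -/
def E (K j : ℕ) : Set ℝ := Set.Ico ((j : ℝ) / 2 ^ K) (((j : ℝ) + 1) / 2 ^ K)

lemma mem_E (K j : ℕ) {x : ℝ} (hx : 0 ≤ x) : x ∈ E K j ↔ ⌊x * 2 ^ K⌋₊ = j := by
  have h2 : (0:ℝ) < 2 ^ K := by positivity
  unfold E
  rw [Set.mem_Ico, Nat.floor_eq_iff (by positivity), div_le_iff₀ h2, lt_div_iff₀ h2]

lemma E_nonneg {K j : ℕ} {x : ℝ} (hx : x ∈ E K j) : 0 ≤ x := le_trans (by positivity) hx.1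

lemma E_measurable (K j : ℕ) : MeasurableSet (E K j) := measurableSet_Ico

lemma E_volume (K j : ℕ) : volume (E K j) = ENNReal.ofReal ((2 ^ K)⁻¹) := by
  unfold E; rw [Real.volume_Ico]; congr 1; ring

lemma E_union (K L : ℕ) : Set.Ico (0 : ℝ) (2 ^ L) = ⋃ j ∈ Finset.range (2 ^ (K + L)), E K j := by
  ext x
  simp only [Set.mem_iUnion, Finset.mem_range, exists_prop]
  constructor
  · intro hx
    refine ⟨⌊x * 2 ^ K⌋₊, ?_, (mem_E K _ hx.1).2 rfl⟩
    rw [Nat.floor_lt (mul_nonneg hx.1 (by positivity))]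
    push_cast
    rw [pow_add, mul_comm]
    exact mul_lt_mul_of_pos_left hx.2 (by positivity)
  · rintro ⟨j, hj, hx⟩
    refine ⟨E_nonneg hx, hx.2.trans_le ?_⟩
    rw [div_le_iff₀ (by positivity)]
    have : ((j + 1 : ℕ) : ℝ) ≤ ((2 ^ (K + L) : ℕ) : ℝ) := by exact_mod_cast hj
    push_cast at this
    rwa [pow_add, mul_comm] at this

lemma E_disj (K : ℕ) (S : Set ℕ) : S.PairwiseDisjoint (E K) := by
  intro i _ j _ hij
  rw [Function.onFun, Set.disjoint_left]
  intro x hi hj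
  exact hij (((mem_E K i (E_nonneg hi)).1 hi).symm.trans ((mem_E K j (E_nonneg hi)).1 hj))

lemma E_lt {K i j : ℕ} (h : i < j) {x y : ℝ} (hx : x ∈ E K i) (hy : y ∈ E K j) : x < y := by
  refine hx.2.trans_le (le_trans ?_ hy.1)
  have : (i : ℝ) + 1 ≤ j := by exact_mod_cast h
  gcongr

lemma cell_one (L M : ℕ) (v : Set ℝ) (hv : v.OrdConnected) : ∃ Z : Finset ℕ, Z.card ≤ 2 ∧
    ∀ p c c', c < M → c' < M → c / 2 ^ p = c' / 2 ^ p → (∀ e ∈ Z, e / 2 ^ p ≠ c / 2 ^ p) →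
      ∫ ξ in E L c, v.indicator (fun _ => (1 : ℝ)) ξ = ∫ ξ in E L c', v.indicator (fun _ => (1 : ℝ)) ξ := by
  set S := (Finset.range M).filter fun c => (E L c ∩ v).Nonempty with hS
  by_cases hne : S.Nonempty
  · refine ⟨{S.min' hne, S.max' hne}, Finset.card_le_two, ?_⟩
    intro p c c' hc hc' hcc hZ
    have hmin := hZ (S.min' hne) (by simp)
    have hmax := hZ (S.max' hne) (by simp)
    by_cases hex : ∃ d < M, d / 2 ^ p = c / 2 ^ p ∧ (E L d ∩ v).Nonempty
    · obtain ⟨d, hdM, hd, hdv⟩ := hex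
      have hdS : d ∈ S := Finset.mem_filter.2 ⟨Finset.mem_range.2 hdM, hdv⟩
      have h1 : S.min' hne / 2 ^ p < c / 2 ^ p :=
        lt_of_le_of_ne (by rw [← hd]; exact Nat.div_le_div_right (Finset.min'_le _ _ hdS)) hmin
      have h2 : c / 2 ^ p < S.max' hne / 2 ^ p :=
        lt_of_le_of_ne (by rw [← hd]; exact Nat.div_le_div_right (Finset.le_max' _ _ hdS)) hmax.symm
      obtain ⟨x, hx, hxv⟩ := (Finset.mem_filter.1 (S.min'_mem hne)).2
      obtain ⟨y, hy, hyv⟩ := (Finset.mem_filter.1 (S.max'_mem hne)).2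
      have key : ∀ k, k / 2 ^ p = c / 2 ^ p →
          ∫ ξ in E L k, v.indicator (fun _ => (1 : ℝ)) ξ = (2 ^ L)⁻¹ := by
        intro k hk
        have hlt1 : S.min' hne < k := by
          by_contra hcon
          have := Nat.div_le_div_right (c := 2 ^ p) (not_lt.1 hcon)
          omega
        have hlt2 : k < S.max' hne := by
          by_contra hcon
          have := Nat.div_le_div_right (c := 2 ^ p) (not_lt.1 hcon)
          omega
        have hsub : ∀ z ∈ E L k, v.indicator (fun _ => (1 : ℝ)) z = 1 := by
          intro z hz
          rw [Set.indicator_of_mem]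
          exact hv.out hxv hyv ⟨(E_lt hlt1 hx hz).le, (E_lt hlt2 hz hy).le⟩
        rw [setIntegral_congr_fun (E_measurable L k) hsub]
        simp only [integral_const, smul_eq_mul, mul_one, measureReal_restrict_apply_univ]
        rw [measureReal_def, E_volume, ENNReal.toReal_ofReal (by positivity)]
      rw [key c rfl, key c' hcc.symm]
    · have key : ∀ k < M, k / 2 ^ p = c / 2 ^ p →
          ∫ ξ in E L k, v.indicator (fun _ => (1 : ℝ)) ξ = 0 := by
        intro k hkM hk
        apply setIntegral_eq_zero_of_forall_eq_zero
        intro z hz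
        rw [Set.indicator_of_notMem]
        intro hzv
        exact hex ⟨k, hkM, hk, z, hz, hzv⟩
      rw [key c hc rfl, key c' hc' hcc.symm]
  · refine ⟨∅, by simp, ?_⟩
    intro p c c' hc hc' _ _
    have key : ∀ k < M, ∫ ξ in E L k, v.indicator (fun _ => (1 : ℝ)) ξ = 0 := by
      intro k hkM
      apply setIntegral_eq_zero_of_forall_eq_zero
      intro z hz
      rw [Set.indicator_of_notMem]
      intro hzv
      exact hne ⟨k, Finset.mem_filter.2 ⟨Finset.mem_range.2 hkM, z, hz, hzv⟩⟩
    rw [key c hc, key c' hc']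

end WR

namespace WR

lemma cells_integrable (K L : ℕ) (φ : ℕ → ℝ) (h : ℝ → ℝ) (hh : IntegrableOn h (Set.Ico 0 (2 ^ L))) :
    IntegrableOn (fun y => φ ⌊y * 2 ^ K⌋₊ * h y) (Set.Ico 0 (2 ^ L)) := by
  rw [E_union K L] at hh ⊢
  rw [integrableOn_finset_iUnion] at hh ⊢
  intro j hj
  refine IntegrableOn.congr_fun ((hh j hj).const_mul (φ j)) ?_ (E_measurable K j)
  intro y hy
  simp only
  rw [(mem_E K j (E_nonneg hy)).1 hy]

lemma int_cells (K L : ℕ) (φ : ℕ → ℝ) (h : ℝ → ℝ) (hh : IntegrableOn h (Set.Ico 0 (2 ^ L))) :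
    ∫ y in Set.Ico 0 (2 ^ L), φ ⌊y * 2 ^ K⌋₊ * h y =
      ∑ j ∈ Finset.range (2 ^ (K + L)), φ j * ∫ y in E K j, h y := by
  have h1 := cells_integrable K L φ h hh
  rw [E_union K L] at h1 ⊢
  rw [integrableOn_finset_iUnion] at h1
  rw [integral_biUnion_finset _ (fun j _ => E_measurable K j) (E_disj K _) h1]
  refine Finset.sum_congr rfl fun j _ => ?_
  rw [← integral_const_mul]
  refine setIntegral_congr_fun (E_measurable K j) fun y hy => ?_
  rw [(mem_E K j (E_nonneg hy)).1 hy]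

lemma lint_cells (K L : ℕ) (ψ : ℕ → ℝ≥0∞) :
    ∫⁻ x in Set.Ico (0 : ℝ) (2 ^ L), ψ ⌊x * 2 ^ K⌋₊ =
      ∑ j ∈ Finset.range (2 ^ (K + L)), ψ j * ENNReal.ofReal ((2 ^ K)⁻¹) := by
  rw [E_union K L, lintegral_biUnion_finset (E_disj K _) (fun j _ => E_measurable K j)]
  refine Finset.sum_congr rfl fun j _ => ?_
  rw [setLIntegral_congr_fun (g := fun _ => ψ j) (E_measurable K j), setLIntegral_const, E_volume]
  intro y hy
  simp only
  rw [(mem_E K j (E_nonneg hy)).1 hy]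

lemma jensen_cell (q : ℝ) (hq1 : 1 < q) (K j : ℕ) (g : ℝ → ℝ) (hg : IntegrableOn g (E K j)) :
    ‖∫ y in E K j, g y‖ₑ ^ q ≤
      ENNReal.ofReal ((2 ^ K)⁻¹) ^ (q - 1) * ∫⁻ y in E K j, ‖g y‖ₑ ^ q := by
  have hq0 : 0 < q := by linarith
  have h1 : ‖∫ y in E K j, g y‖ₑ ≤ eLpNorm g 1 (volume.restrict (E K j)) := by
    rw [eLpNorm_one_eq_lintegral_enorm]; exact enorm_integral_le_lintegral_enorm _
  have h2 := eLpNorm_le_eLpNorm_mul_rpow_measure_univ (p := 1) (q := ENNReal.ofReal q)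
    (by rw [← ENNReal.ofReal_one]; exact ENNReal.ofReal_le_ofReal hq1.le) hg.aestronglyMeasurable
  rw [eLpNorm_eq_lintegral_rpow_enorm_toReal (by simpa using hq0) ENNReal.ofReal_ne_top,
    ENNReal.toReal_ofReal hq0.le, Measure.restrict_apply_univ, E_volume] at h2
  have h3 := ENNReal.rpow_le_rpow (h1.trans h2) hq0.le
  rw [ENNReal.mul_rpow_of_nonneg _ _ hq0.le, ← ENNReal.rpow_mul, ← ENNReal.rpow_mul,
    one_div_mul_cancel hq0.ne', ENNReal.rpow_one, mul_comm] at h3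
  have e : (1 / (1 : ℝ≥0∞).toReal - 1 / q) * q = q - 1 := by
    simp; field_simp
  rwa [e] at h3

lemma V_norm (q : ℝ) (hq1 : 1 < q) : ∃ C : ℝ, 0 < C ∧ ∀ (N : ℕ) (B : ℝ) (m : ℝ → ℝ), 1 ≤ N → 0 ≤ B →
    (∀ ξ, |m ξ| ≤ B) →
    (∀ n L : ℕ, ∃ X : Finset ℕ, X.card ≤ N * 2 ∧ ∀ p c c', c < 2 ^ n → c' < 2 ^ n →
      c / 2 ^ p = c' / 2 ^ p → (∀ e ∈ X, e / 2 ^ p ≠ c / 2 ^ p) →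
        ∫ ξ in E L c, m ξ = ∫ ξ in E L c', m ξ) →
    ∀ (g : ℝ → ℝ), Integrable g μplus → ∀ K L : ℕ,
    ∫⁻ x in Set.Ico (0 : ℝ) (2 ^ L), ‖V (K + L) (fun c => ∫ ξ in E L c, m ξ)
        (fun i => ∫ y in E K i, g y) ⌊x * 2 ^ K⌋₊‖ₑ ^ q ≤
      ENNReal.ofReal (C * (N : ℝ) ^ |1 / q - 1 / 2| * B) ^ q * ∫⁻ y, ‖g y‖ₑ ^ q ∂μplus := by
  obtain ⟨C, hC, H⟩ := V_bound q hq1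
  refine ⟨C, hC, ?_⟩
  intro N B m hN hB hm hcell g hg K L
  have hq0 : 0 < q := by linarith
  obtain ⟨X, hX, hconst⟩ := hcell (K + L) L
  set mc := fun c => ∫ ξ in E L c, m ξ with hmc
  set γ := fun i => ∫ y in E K i, g y with hγ
  set D := C * (N : ℝ) ^ |1 / q - 1 / 2| with hD
  have hD0 : 0 ≤ D := by positivity
  have hmb : ∀ c < 2 ^ (K + L), |mc c| ≤ B * (2 ^ L)⁻¹ := by
    intro c _
    have := norm_setIntegral_le_of_norm_le_const (μ := volume) (s := E L c) (f := m) (C := B)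
      (by rw [E_volume]; exact ENNReal.ofReal_lt_top) (fun x _ => hm x)
    rwa [measureReal_def, E_volume, ENNReal.toReal_ofReal (by positivity)] at this
  have h1 := H (K + L) N mc X (B * (2 ^ L)⁻¹) (by positivity) hN hX hmb hconst γ
  rw [← hD] at h1
  have e1 : (2 : ℝ) ^ (K + L) * (D * (B * (2 ^ L)⁻¹)) = 2 ^ K * (D * B) := by
    rw [pow_add]; field_simp
  rw [e1] at h1
  rw [lint_cells K L (fun j => ‖V (K + L) mc γ j‖ₑ ^ q), ← Finset.sum_mul]
  have conv : ∀ a : ℝ, ‖a‖ₑ ^ q = ENNReal.ofReal (|a| ^ q) := by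
    intro a
    rw [Real.enorm_eq_ofReal_abs, ENNReal.ofReal_rpow_of_nonneg (abs_nonneg _) hq0.le]
  have h2 : ∑ j ∈ Finset.range (2 ^ (K + L)), ‖V (K + L) mc γ j‖ₑ ^ q ≤
      ENNReal.ofReal (2 ^ K * (D * B)) ^ q * ∑ j ∈ Finset.range (2 ^ (K + L)), ‖γ j‖ₑ ^ q := by
    simp only [conv]
    rw [← ENNReal.ofReal_sum_of_nonneg (fun _ _ => by positivity),
      ← ENNReal.ofReal_sum_of_nonneg (fun _ _ => by positivity),
      ENNReal.ofReal_rpow_of_nonneg (by positivity) hq0.le, ← ENNReal.ofReal_mul (by positivity)]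
    exact ENNReal.ofReal_le_ofReal h1
  have hgE : ∀ j, IntegrableOn g (E K j) := fun j =>
    IntegrableOn.mono_set (t := Set.Ici 0) hg (fun x hx => E_nonneg hx)
  have h3 : ∑ j ∈ Finset.range (2 ^ (K + L)), ‖γ j‖ₑ ^ q ≤
      ENNReal.ofReal ((2 ^ K)⁻¹) ^ (q - 1) * ∫⁻ y, ‖g y‖ₑ ^ q ∂μplus := by
    calc _ ≤ ∑ j ∈ Finset.range (2 ^ (K + L)),
          ENNReal.ofReal ((2 ^ K)⁻¹) ^ (q - 1) * ∫⁻ y in E K j, ‖g y‖ₑ ^ q :=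
          Finset.sum_le_sum fun j _ => jensen_cell q hq1 K j g (hgE j)
      _ = ENNReal.ofReal ((2 ^ K)⁻¹) ^ (q - 1) * ∫⁻ y in Set.Ico (0 : ℝ) (2 ^ L), ‖g y‖ₑ ^ q := by
          rw [← Finset.mul_sum, E_union K L,
            lintegral_biUnion_finset (E_disj K _) (fun j _ => E_measurable K j)]
      _ ≤ _ := by
          gcongr
          unfold μplus
          exact Measure.restrict_mono Set.Ico_subset_Ici_self le_rfl
  calc _ ≤ ENNReal.ofReal (2 ^ K * (D * B)) ^ q * (ENNReal.ofReal ((2 ^ K)⁻¹) ^ (q - 1) *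
        ∫⁻ y, ‖g y‖ₑ ^ q ∂μplus) * ENNReal.ofReal ((2 ^ K)⁻¹) := by
        gcongr
        exact h2.trans (by gcongr)
    _ = (ENNReal.ofReal (2 ^ K * (D * B)) ^ q * (ENNReal.ofReal ((2 ^ K)⁻¹) ^ (q - 1) *
        ENNReal.ofReal ((2 ^ K)⁻¹))) * ∫⁻ y, ‖g y‖ₑ ^ q ∂μplus := by ring
    _ = _ := by
        congr 1
        have hp : (0 : ℝ) < (2 ^ K)⁻¹ := by positivity
        rw [ENNReal.ofReal_rpow_of_nonneg (by positivity) hq0.le, ENNReal.ofReal_rpow_of_pos hp,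
          ← ENNReal.ofReal_mul (by positivity), ← ENNReal.ofReal_mul (by positivity),
          ENNReal.ofReal_rpow_of_nonneg (by positivity) hq0.le]
        congr 1
        rw [← Real.rpow_add_one hp.ne', sub_add_cancel, ← Real.mul_rpow (by positivity) hp.le]
        congr 1
        field_simp

lemma W_mul_integrable {g : ℝ → ℝ} (hg : Integrable g μplus) (ξ : ℝ) (hξ : 0 ≤ ξ) :
    Integrable (fun y => W ξ y * g y) μplus :=
  hg.bdd_mul (c := 1) (W_measurable ξ hξ) (Filter.Eventually.of_forall fun x => by
    rw [Real.norm_eq_abs, W_abs])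

lemma V_eq_int (K L : ℕ) (m g : ℝ → ℝ) (B : ℝ) (hmm : Measurable m) (hm : ∀ ξ, |m ξ| ≤ B)
    (hg : Integrable g μplus) (x : ℝ) (hx : x ∈ Set.Ico (0 : ℝ) (2 ^ L)) :
    IntegrableOn (fun ξ => W x ξ * (m ξ * ∫ y in Set.Ico (0 : ℝ) (2 ^ L), W ξ y * g y))
      (Set.Ico 0 (2 ^ K)) ∧
    V (K + L) (fun c => ∫ ξ in E L c, m ξ) (fun i => ∫ y in E K i, g y) ⌊x * 2 ^ K⌋₊ =
      ∫ ξ in Set.Ico (0 : ℝ) (2 ^ K), W x ξ * (m ξ * ∫ y in Set.Ico (0 : ℝ) (2 ^ L), W ξ y * g y) := by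
  have hgI : IntegrableOn g (Set.Ico 0 (2 ^ L)) :=
    IntegrableOn.mono_set (t := Set.Ici 0) hg Set.Ico_subset_Ici_self
  have hmI : IntegrableOn m (Set.Ico 0 (2 ^ K)) :=
    Measure.integrableOn_of_bounded (M := B) (by simp) hmm.aestronglyMeasurable
      (Filter.Eventually.of_forall fun ξ => hm ξ)
  set φ : ℕ → ℝ := fun c => FW.chi (hi (K + L) c) (lo (K + L) ⌊x * 2 ^ K⌋₊) *
    ∑ i ∈ Finset.range (2 ^ (K + L)), FW.chi (hi (K + L) c) (lo (K + L) i) * ∫ y in E K i, g y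
    with hφ
  have hin : ∀ ξ ∈ Set.Ico (0 : ℝ) (2 ^ K), φ ⌊ξ * 2 ^ L⌋₊ * m ξ =
      W x ξ * (m ξ * ∫ y in Set.Ico (0 : ℝ) (2 ^ L), W ξ y * g y) := by
    intro ξ hξ
    have h1 : ∫ y in Set.Ico (0 : ℝ) (2 ^ L), W ξ y * g y =
        ∑ i ∈ Finset.range (2 ^ (K + L)), FW.chi (hi (K + L) ⌊ξ * 2 ^ L⌋₊) (lo (K + L) i) *
          ∫ y in E K i, g y := by
      rw [← int_cells K L (fun i => FW.chi (hi (K + L) ⌊ξ * 2 ^ L⌋₊) (lo (K + L) i)) g hgI]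
      refine setIntegral_congr_fun measurableSet_Ico fun y hy => ?_
      rw [W_eq_chi K L ξ y hξ.1 hy.1 hξ.2 hy.2]
    rw [h1, W_comm, W_eq_chi K L ξ x hξ.1 hx.1 hξ.2 hx.2]
    simp only [hφ]
    ring
  constructor
  · exact (cells_integrable L K φ m hmI).congr_fun hin measurableSet_Ico
  · rw [← setIntegral_congr_fun measurableSet_Ico hin, int_cells L K φ m hmI, add_comm L K]
    unfold V
    refine Finset.sum_congr rfl fun c _ => ?_
    simp only [hφ]
    ring

lemma V_err (K L : ℕ) (m g : ℝ → ℝ) (B : ℝ) (hmm : Measurable m) (hm : ∀ ξ, |m ξ| ≤ B)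
    (hg : Integrable g μplus) (hF : Integrable (fun ξ => m ξ * walshFT g ξ) μplus)
    (x : ℝ) (hx : x ∈ Set.Ico (0 : ℝ) (2 ^ L)) :
    |V (K + L) (fun c => ∫ ξ in E L c, m ξ) (fun i => ∫ y in E K i, g y) ⌊x * 2 ^ K⌋₊ -
      ∫ ξ in Set.Ico (0 : ℝ) (2 ^ K), W x ξ * (m ξ * walshFT g ξ)| ≤
      B * (∫ y in Set.Ici ((2 : ℝ) ^ L), |g y|) * 2 ^ K := by
  obtain ⟨h1, h2⟩ := V_eq_int K L m g B hmm hm hg x hx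
  have h3 : IntegrableOn (fun ξ => W x ξ * (m ξ * walshFT g ξ)) (Set.Ico 0 (2 ^ K)) :=
    IntegrableOn.mono_set (t := Set.Ici 0) (W_mul_integrable hF x hx.1) Set.Ico_subset_Ici_self
  have hB : 0 ≤ B := (abs_nonneg _).trans (hm 0)
  rw [h2, ← integral_sub h1 h3]
  have h4 := norm_setIntegral_le_of_norm_le_const (μ := volume) (s := Set.Ico (0 : ℝ) (2 ^ K))
    (f := fun ξ => W x ξ * (m ξ * ∫ y in Set.Ico (0 : ℝ) (2 ^ L), W ξ y * g y) -
      W x ξ * (m ξ * walshFT g ξ)) (C := B * (∫ y in Set.Ici ((2 : ℝ) ^ L), |g y|)) (by simp) ?_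
  · simpa using h4
  · intro ξ hξ
    have hWg : IntegrableOn (fun y => W ξ y * g y) (Set.Ici 0) := W_mul_integrable hg ξ hξ.1
    have hun : Set.Ici (0 : ℝ) = Set.Ico 0 (2 ^ L) ∪ Set.Ici (2 ^ L) :=
      (Set.Ico_union_Ici_eq_Ici (by positivity)).symm
    have h5 : walshFT g ξ = (∫ y in Set.Ico (0 : ℝ) (2 ^ L), W ξ y * g y) +
        ∫ y in Set.Ici ((2 : ℝ) ^ L), W ξ y * g y := by
      rw [walshFT_eq g ξ hξ.1]
      unfold μplus
      rw [hun] at hWg ⊢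
      refine setIntegral_union ?_ measurableSet_Ici hWg.left_of_union hWg.right_of_union
      rw [Set.disjoint_left]
      intro z hz hz'
      exact absurd hz.2 (not_lt.2 hz')
    have h6 : |∫ y in Set.Ici ((2 : ℝ) ^ L), W ξ y * g y| ≤ ∫ y in Set.Ici ((2 : ℝ) ^ L), |g y| := by
      refine (abs_integral_le_integral_abs).trans (le_of_eq ?_)
      refine integral_congr_ae (Filter.Eventually.of_forall fun y => ?_)
      simp only [abs_mul, W_abs, one_mul]
    rw [← mul_sub, ← mul_sub, h5, sub_add_cancel_left, Real.norm_eq_abs, abs_mul, abs_mul, W_abs,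
      one_mul, abs_neg]
    exact mul_le_mul (hm ξ) h6 (abs_nonneg _) hB

lemma core (q : ℝ) (hq1 : 1 < q) : ∃ C : ℝ, 0 < C ∧ ∀ (N : ℕ) (B : ℝ) (m : ℝ → ℝ), 1 ≤ N → 0 ≤ B →
    Measurable m → (∀ ξ, |m ξ| ≤ B) →
    (∀ n L : ℕ, ∃ X : Finset ℕ, X.card ≤ N * 2 ∧ ∀ p c c', c < 2 ^ n → c' < 2 ^ n →
      c / 2 ^ p = c' / 2 ^ p → (∀ e ∈ X, e / 2 ^ p ≠ c / 2 ^ p) →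
        ∫ ξ in E L c, m ξ = ∫ ξ in E L c', m ξ) →
    ∀ (g : ℝ → ℝ), Integrable g μplus → Integrable (fun ξ => m ξ * walshFT g ξ) μplus →
    ∫⁻ x, ‖walshFT (fun ξ => m ξ * walshFT g ξ) x‖ₑ ^ q ∂μplus ≤
      ENNReal.ofReal (C * (N : ℝ) ^ |1 / q - 1 / 2| * B) ^ q * ∫⁻ y, ‖g y‖ₑ ^ q ∂μplus := by
  obtain ⟨C, hC, H⟩ := V_norm q hq1
  refine ⟨C, hC, ?_⟩
  intro N B m hN hB hmm hm hcell g hg hF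
  have hq0 : 0 < q := by linarith
  have hV := H N B m hN hB hm hcell g hg
  set R := ENNReal.ofReal (C * (N : ℝ) ^ |1 / q - 1 / 2| * B) ^ q * ∫⁻ y, ‖g y‖ₑ ^ q ∂μplus
  -- tails
  have htail : Tendsto (fun L : ℕ => ∫ y in Set.Ici ((2 : ℝ) ^ L), |g y|) atTop (nhds 0) := by
    have h := tendsto_setIntegral_of_antitone (μ := volume) (f := fun y => |g y|)
      (s := fun L : ℕ => Set.Ici ((2 : ℝ) ^ L)) (fun _ => measurableSet_Ici)
      (fun a b hab => Set.Ici_subset_Ici.2 (pow_le_pow_right₀ (by norm_num) hab))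
      ⟨0, IntegrableOn.mono_set (t := Set.Ici 0) hg.abs (Set.Ici_subset_Ici.2 (by positivity))⟩
    have he : (⋂ L : ℕ, Set.Ici ((2 : ℝ) ^ L)) = ∅ := by
      ext y
      simp only [Set.mem_iInter, Set.mem_Ici, Set.mem_empty_iff_false, iff_false, not_forall, not_le]
      exact pow_unbounded_of_one_lt y (by norm_num)
    rw [he] at h
    simpa using h
  have hL : ∀ K : ℕ, ∃ L : ℕ, K ≤ L ∧
      B * (∫ y in Set.Ici ((2 : ℝ) ^ L), |g y|) * 2 ^ K ≤ 1 / ((K : ℝ) + 1) := by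
    intro K
    have h1 : Tendsto (fun L : ℕ => B * (∫ y in Set.Ici ((2 : ℝ) ^ L), |g y|) * 2 ^ K) atTop
        (nhds 0) := by
      simpa using (htail.const_mul B).mul_const (2 ^ K)
    have h2 : ∀ᶠ L : ℕ in atTop, B * (∫ y in Set.Ici ((2 : ℝ) ^ L), |g y|) * 2 ^ K <
        1 / ((K : ℝ) + 1) := h1.eventually (gt_mem_nhds (by positivity))
    obtain ⟨L, hL1, hL2⟩ := (h2.and (eventually_ge_atTop K)).exists
    exact ⟨L, hL2, hL1.le⟩
  choose Lk hLK hLb using hL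
  set v : ℕ → ℝ → ℝ := fun K x => V (K + Lk K) (fun c => ∫ ξ in E (Lk K) c, m ξ)
    (fun i => ∫ y in E K i, g y) ⌊x * 2 ^ K⌋₊ with hv
  have hvm : ∀ K, Measurable (v K) := by
    intro K
    exact (measurable_from_top (f := V (K + Lk K) (fun c => ∫ ξ in E (Lk K) c, m ξ)
      (fun i => ∫ y in E K i, g y))).comp (Nat.measurable_floor.comp (measurable_id.mul_const _))
  set u : ℕ → ℝ → ℝ≥0∞ := fun K => (Set.Ico (0 : ℝ) (2 ^ Lk K)).indicator fun x => ‖v K x‖ₑ ^ q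
    with hu
  have hum : ∀ K, Measurable (u K) := fun K =>
    ((hvm K).enorm.pow_const q).indicator measurableSet_Ico
  have huI : ∀ K, ∫⁻ x, u K x ∂μplus ≤ R := by
    intro K
    calc _ ≤ ∫⁻ x, u K x := by
          unfold μplus; exact setLIntegral_le_lintegral _ _
      _ = ∫⁻ x in Set.Ico (0 : ℝ) (2 ^ Lk K), ‖v K x‖ₑ ^ q := lintegral_indicator measurableSet_Ico _
      _ ≤ R := hV K (Lk K)
  have hlim : ∀ x ∈ Set.Ici (0 : ℝ), Tendsto (fun K => u K x) atTop
      (nhds (‖walshFT (fun ξ => m ξ * walshFT g ξ) x‖ₑ ^ q)) := by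
    intro x hx
    obtain ⟨K0, hK0⟩ := pow_unbounded_of_one_lt x (by norm_num : (1 : ℝ) < 2)
    have hmem : ∀ K ≥ K0, x ∈ Set.Ico (0 : ℝ) (2 ^ Lk K) := fun K hK =>
      ⟨hx, hK0.trans_le (pow_le_pow_right₀ (by norm_num) (hK.trans (hLK K)))⟩
    have hWF : IntegrableOn (fun ξ => W x ξ * (m ξ * walshFT g ξ)) (Set.Ici 0) :=
      W_mul_integrable hF x hx
    have hun : (⋃ K : ℕ, Set.Ico (0 : ℝ) (2 ^ K)) = Set.Ici 0 := by
      ext y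
      simp only [Set.mem_iUnion, Set.mem_Ico, Set.mem_Ici]
      constructor
      · rintro ⟨K, h, _⟩; exact h
      · intro h
        obtain ⟨K, hK⟩ := pow_unbounded_of_one_lt y (by norm_num : (1 : ℝ) < 2)
        exact ⟨K, h, hK⟩
    have h1 := tendsto_setIntegral_of_monotone (μ := volume)
      (f := fun ξ => W x ξ * (m ξ * walshFT g ξ)) (s := fun K : ℕ => Set.Ico (0 : ℝ) (2 ^ K))
      (fun _ => measurableSet_Ico)
      (fun a b hab => Set.Ico_subset_Ico_right (pow_le_pow_right₀ (by norm_num) hab))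
      (by rw [hun]; exact hWF)
    rw [hun] at h1
    have h2 : Tendsto (fun K => v K x - ∫ ξ in Set.Ico (0 : ℝ) (2 ^ K), W x ξ * (m ξ * walshFT g ξ))
        atTop (nhds 0) := by
      refine squeeze_zero_norm' ?_ tendsto_one_div_add_atTop_nhds_zero_nat
      filter_upwards [eventually_ge_atTop K0] with K hK
      exact (V_err K (Lk K) m g B hmm hm hg hF x (hmem K hK)).trans (hLb K)
    have h3 : Tendsto (fun K => v K x) atTop (nhds (walshFT (fun ξ => m ξ * walshFT g ξ) x)) := by
      have := h2.add h1
      simp only [sub_add_cancel, zero_add] at this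
      rw [walshFT_eq _ x hx]
      exact this
    have h4 : Tendsto (fun K => ‖v K x‖ₑ ^ q) atTop
      (nhds (‖walshFT (fun ξ => m ξ * walshFT g ξ) x‖ₑ ^ q)) :=
      (ENNReal.continuous_rpow_const.tendsto _).comp ((continuous_enorm.tendsto _).comp h3)
    refine h4.congr' ?_
    filter_upwards [eventually_ge_atTop K0] with K hK
    simp only [hu]
    rw [Set.indicator_of_mem (hmem K hK)]
  calc ∫⁻ x, ‖walshFT (fun ξ => m ξ * walshFT g ξ) x‖ₑ ^ q ∂μplus
      = ∫⁻ x, liminf (fun K => u K x) atTop ∂μplus := by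
        unfold μplus
        refine setLIntegral_congr_fun measurableSet_Ici fun x hx => ?_
        exact (hlim x hx).liminf_eq.symm
    _ ≤ liminf (fun K => ∫⁻ x, u K x ∂μplus) atTop := lintegral_liminf_le hum
    _ ≤ R := Filter.liminf_le_of_frequently_le' (Filter.Frequently.of_forall huI)

end WR

namespace WR

lemma mult_bound (Y : Set (Set ℝ)) (hY : Y.Finite) (hd : Y.PairwiseDisjoint id) (b : Set ℝ → ℝ)
    (B : ℝ) (hB : 0 ≤ B) (hb : ∀ v ∈ Y, |b v| ≤ B) (ξ : ℝ) :
    |∑ v ∈ hY.toFinset, b v * Set.indicator v (fun _ => (1 : ℝ)) ξ| ≤ B := by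
  by_cases h : ∃ v ∈ Y, ξ ∈ v
  · obtain ⟨v, hv, hξ⟩ := h
    rw [Finset.sum_eq_single v]
    · rw [Set.indicator_of_mem hξ, mul_one]; exact hb v hv
    · intro w hw hwv
      rw [Set.indicator_of_notMem, mul_zero]
      intro hξw
      exact Set.disjoint_left.1 (hd (hY.mem_toFinset.1 hw) hv hwv) hξw hξ
    · intro h; exact absurd (hY.mem_toFinset.2 hv) h
  · rw [Finset.sum_eq_zero]
    · simpa using hB
    · intro v hv
      rw [Set.indicator_of_notMem, mul_zero]
      exact fun hξ => h ⟨v, hY.mem_toFinset.1 hv, hξ⟩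

lemma mult_cells (Y : Set (Set ℝ)) (hY : Y.Finite) (ho : ∀ v ∈ Y, v.OrdConnected) (b : Set ℝ → ℝ)
    (n L : ℕ) : ∃ X : Finset ℕ, X.card ≤ Y.ncard * 2 ∧ ∀ p c c', c < 2 ^ n → c' < 2 ^ n →
      c / 2 ^ p = c' / 2 ^ p → (∀ e ∈ X, e / 2 ^ p ≠ c / 2 ^ p) →
        ∫ ξ in E L c, ∑ v ∈ hY.toFinset, b v * Set.indicator v (fun _ => (1 : ℝ)) ξ =
        ∫ ξ in E L c', ∑ v ∈ hY.toFinset, b v * Set.indicator v (fun _ => (1 : ℝ)) ξ := by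
  have hz : ∀ v : Set ℝ, ∃ Z : Finset ℕ, v ∈ Y → (Z.card ≤ 2 ∧ ∀ p c c', c < 2 ^ n → c' < 2 ^ n →
      c / 2 ^ p = c' / 2 ^ p → (∀ e ∈ Z, e / 2 ^ p ≠ c / 2 ^ p) →
      ∫ ξ in E L c, v.indicator (fun _ => (1 : ℝ)) ξ =
        ∫ ξ in E L c', v.indicator (fun _ => (1 : ℝ)) ξ) := by
    intro v
    by_cases hv : v ∈ Y
    · obtain ⟨Z, h⟩ := cell_one L (2 ^ n) v (ho v hv)
      exact ⟨Z, fun _ => h⟩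
    · exact ⟨∅, fun h => absurd h hv⟩
  choose Z hZ using hz
  refine ⟨hY.toFinset.biUnion Z, ?_, ?_⟩
  · rw [Set.ncard_eq_toFinset_card Y hY]
    exact Finset.card_biUnion_le_card_mul _ _ _ fun v hv => (hZ v (hY.mem_toFinset.1 hv)).1
  · intro p c c' hc hc' hcc hX
    have hInteg : ∀ k, ∫ ξ in E L k, ∑ v ∈ hY.toFinset, b v * Set.indicator v (fun _ => (1 : ℝ)) ξ =
        ∑ v ∈ hY.toFinset, b v * ∫ ξ in E L k, Set.indicator v (fun _ => (1 : ℝ)) ξ := by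
      intro k
      rw [integral_finsetSum]
      · simp only [integral_const_mul]
      · intro v hv
        refine Integrable.const_mul ?_ _
        refine Measure.integrableOn_of_bounded (M := 1)
          (by rw [E_volume]; exact ENNReal.ofReal_ne_top) ?_ ?_
        · exact (measurable_const.indicator
            (ho v (hY.mem_toFinset.1 hv)).measurableSet).aestronglyMeasurable
        · refine Filter.Eventually.of_forall fun z => ?_
          by_cases hzv : z ∈ v <;> simp [hzv]
    rw [hInteg, hInteg]
    refine Finset.sum_congr rfl fun v hv => ?_
    rw [(hZ v (hY.mem_toFinset.1 hv)).2 p c c' hc hc' hcc fun e he =>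
      hX e (Finset.mem_biUnion.2 ⟨v, hv, he⟩)]

lemma walshFT_zero_of_not (f : ℝ → ℝ) (hf : ¬ Integrable f μplus) (ξ : ℝ) (hξ : 0 ≤ ξ) :
    walshFT f ξ = 0 := by
  rw [walshFT_eq f ξ hξ]
  apply integral_undef
  intro h
  apply hf
  have := W_mul_integrable h ξ hξ
  refine this.congr (Filter.Eventually.of_forall fun y => ?_)
  simp only
  rcases W_cases ξ y with h | h <;> rw [h] <;> ring

lemma walshFT_zero (f : ℝ → ℝ) (hf : ∀ x, 0 ≤ x → f x = 0) (ξ : ℝ) : walshFT f ξ = 0 := by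
  unfold walshFT
  apply setIntegral_eq_zero_of_forall_eq_zero
  intro x hx
  rw [hf x hx, mul_zero]

end WR

/-- Lemma 3.3: for a finite collection `Υ` of pairwise disjoint subintervals of `ℝ⁺`
and coefficients `b`, `‖Σ_υ b_υ 1_υ‖_{M^q} ≤ C_{q,ε} |Υ|^{|1/q - 1/2| + ε} sup_υ |b_υ|`. -/
theorem interval_multiplier (q eps : ℝ) (hq1 : 1 < q) (heps : 0 < eps) :
    ∃ C : ℝ, 0 < C ∧ ∀ Y : Set (Set ℝ), Y.Finite → Y.PairwiseDisjoint id →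
      (∀ v ∈ Y, v ⊆ Set.Ici 0 ∧ v.OrdConnected) → ∀ b : Set ℝ → ℝ,
        Mq q (fun ξ => ∑ᶠ v ∈ Y, b v * Set.indicator v (fun _ => (1 : ℝ)) ξ) ≤
          ENNReal.ofReal C * (Y.ncard : ℝ≥0∞) ^ (|1 / q - 1 / 2| + eps) *
            ⨆ v ∈ Y, (‖b v‖₊ : ℝ≥0∞) := by
  obtain ⟨C, hC, H⟩ := WR.core q hq1
  refine ⟨C, hC, ?_⟩
  intro Y hY hd hv b
  have hq0 : 0 < q := by linarith
  set S : ℝ≥0∞ := ⨆ v ∈ Y, (‖b v‖₊ : ℝ≥0∞) with hS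
  have hStop : S ≠ ⊤ := by
    have : S ≤ ∑ v ∈ hY.toFinset, (‖b v‖₊ : ℝ≥0∞) := by
      refine iSup₂_le fun v hv => ?_
      exact Finset.single_le_sum (f := fun v => (‖b v‖₊ : ℝ≥0∞)) (fun _ _ => zero_le)
        (hY.mem_toFinset.2 hv)
    refine ne_top_of_le_ne_top ?_ this
    exact ENNReal.sum_ne_top.2 fun v _ => ENNReal.coe_ne_top
  set B := S.toReal with hBdef
  have hB : 0 ≤ B := ENNReal.toReal_nonneg
  have hb : ∀ v ∈ Y, |b v| ≤ B := by
    intro v hv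
    have h1 : (‖b v‖₊ : ℝ≥0∞) ≤ S := le_iSup₂ (f := fun v (_ : v ∈ Y) => (‖b v‖₊ : ℝ≥0∞)) v hv
    have := ENNReal.toReal_mono hStop h1
    simpa using this
  have hm : (fun ξ => ∑ᶠ v ∈ Y, b v * Set.indicator v (fun _ => (1 : ℝ)) ξ) =
      fun ξ => ∑ v ∈ hY.toFinset, b v * Set.indicator v (fun _ => (1 : ℝ)) ξ := by
    funext ξ
    rw [finsum_mem_eq_finite_toFinset_sum _ hY]
  rw [hm]
  set m : ℝ → ℝ := fun ξ => ∑ v ∈ hY.toFinset, b v * Set.indicator v (fun _ => (1 : ℝ)) ξ with hmdef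
  have hmm : Measurable m := by
    refine Finset.measurable_sum _ fun v hvY => ?_
    exact (measurable_const.indicator (hv v (hY.mem_toFinset.1 hvY)).2.measurableSet).const_mul _
  have hmb : ∀ ξ, |m ξ| ≤ B := WR.mult_bound Y hY hd b B hB hb
  have hcell := WR.mult_cells Y hY (fun v h => (hv v h).2) b
  unfold Mq
  refine iSup₂_le fun g hg => ?_
  have hzero : (∀ x, 0 ≤ x → walshFT (fun ξ => m ξ * walshFT g ξ) x = 0) →
      eLpNorm (walshFT fun ξ => m ξ * walshFT g ξ) (ENNReal.ofReal q) μplus = 0 := by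
    intro h
    rw [eLpNorm_congr_ae (g := 0), eLpNorm_zero]
    unfold μplus
    rw [Filter.EventuallyEq, ae_restrict_iff' measurableSet_Ici]
    exact Filter.Eventually.of_forall fun x hx => h x hx
  by_cases hgI : Integrable g μplus
  swap
  · rw [hzero]
    · exact zero_le
    · intro x _
      refine WR.walshFT_zero _ (fun ξ hξ => ?_) x
      rw [WR.walshFT_zero_of_not g hgI ξ hξ, mul_zero]
  by_cases hF : Integrable (fun ξ => m ξ * walshFT g ξ) μplus
  swap
  · rw [hzero]
    · exact zero_le
    · intro x hx
      exact WR.walshFT_zero_of_not _ hF x hx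
  rcases Nat.eq_zero_or_pos Y.ncard with hN | hN
  · have hYe : Y = ∅ := (Set.ncard_eq_zero hY).1 hN
    rw [hzero]
    · exact zero_le
    · intro x _
      refine WR.walshFT_zero _ (fun ξ hξ => ?_) x
      have : m ξ = 0 := by
        rw [hmdef]
        refine Finset.sum_eq_zero fun v hvY => ?_
        rw [hY.mem_toFinset, hYe] at hvY
        exact absurd hvY (Set.notMem_empty v)
      rw [this, zero_mul]
  have h1 := H Y.ncard B m hN hB hmm hmb hcell g hgI hF
  have hq' : ENNReal.ofReal q ≠ 0 := by simpa using hq0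
  rw [eLpNorm_eq_lintegral_rpow_enorm_toReal hq' ENNReal.ofReal_ne_top,
    ENNReal.toReal_ofReal hq0.le] at hg ⊢
  have hg1 : ∫⁻ y, ‖g y‖ₑ ^ q ∂μplus = 1 := by
    have := congrArg (fun t => t ^ q) hg
    simpa only [← ENNReal.rpow_mul, one_div_mul_cancel hq0.ne', ENNReal.rpow_one,
      ENNReal.one_rpow] using this
  rw [hg1, mul_one] at h1
  have h2 := ENNReal.rpow_le_rpow h1 (by positivity : 0 ≤ 1 / q)
  rw [← ENNReal.rpow_mul, mul_one_div_cancel hq0.ne', ENNReal.rpow_one] at h2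
  refine h2.trans ?_
  have hN1 : (1 : ℝ) ≤ Y.ncard := by exact_mod_cast hN
  rw [ENNReal.ofReal_mul (by positivity), ENNReal.ofReal_mul hC.le, hBdef,
    ENNReal.ofReal_toReal hStop, ← ENNReal.ofReal_rpow_of_pos (by linarith), ENNReal.ofReal_natCast]
  gcongr
  · exact_mod_cast hN
  · linarith

end
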